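/- If (Y, d, H^h) is a compact metric space that satisfies property (H∞), then there exists a family of 2^ℵ₀ pairwise disjoint compact subsets of Y, each of which is not σ-finite with respect to H^h. -/

import Mathlib

open MeasureTheory Set Filter Topology
open scoped NNReal ENNReal

universe u v

/-- A Hausdorff (gauge) function `h : [0,∞) → [0,∞]`: nondecreasing, right-continuous,
and positive on positive arguments. -/
structure IsHausdorffFunction (h : ℝ≥0 → ℝ≥0∞) : Prop where
  mono : Monotone h
  right_continuous : ∀ t : ℝ≥0, ContinuousWithinAt h (Set.Ici t) t
  pos : ∀ t : ℝ≥0, 0 < t → 0 < h t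

/-- `h` is of finite order: `limsup_{t→0+} h(3t)/h(t) < ∞`. -/
def FiniteOrder (h : ℝ≥0 → ℝ≥0∞) : Prop :=
  Filter.limsup (fun t : ℝ≥0 => h (3 * t) / h t) (nhdsWithin 0 (Set.Ioi 0)) < ⊤

/-- The Hausdorff (outer) measure built from the gauge `h`:
`H^h(E) = sup_{δ>0} inf { Σ h(diam Uᵢ) : E ⊆ ⋃ Uᵢ, diam Uᵢ ≤ δ }`. -/
noncomputable def hausdorffM {Z : Type*} [EMetricSpace Z] (h : ℝ≥0 → ℝ≥0∞) :
    MeasureTheory.OuterMeasure Z :=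
  MeasureTheory.OuterMeasure.mkMetric (fun d => h d.toNNReal)

/-- A set `S` is σ-finite with respect to an outer measure `μ` if it is a countable union
of Carathéodory-measurable sets of finite measure. -/
def SigmaFiniteSet {Z : Type*} (μ : MeasureTheory.OuterMeasure Z) (S : Set Z) : Prop :=
  ∃ A : ℕ → Set Z, (∀ n, μ.IsCaratheodory (A n) ∧ μ (A n) < ⊤) ∧ S = ⋃ n, A n

/-- A metric space has finite structural dimension if for every `ξ > 0` there are `N` and
`δ₀ > 0` such that every set of diameter `δ ≤ δ₀` can be covered by `N` sets of diameter
at most `ξ·δ`. -/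
def FiniteStructuralDim (Z : Type*) [EMetricSpace Z] : Prop :=
  ∀ ξ : ℝ≥0, 0 < ξ → ∃ (N : ℕ) (δ₀ : ℝ≥0), 0 < δ₀ ∧
    ∀ s : Set Z, EMetric.diam s ≤ δ₀ →
      ∃ U : Fin N → Set Z, s ⊆ ⋃ i, U i ∧ ∀ i, EMetric.diam (U i) ≤ ξ * EMetric.diam s

/-- Property (H) for a subspace `Y` of the complete separable metric space `Z`. -/
structure PropertyH {Z : Type*} [MetricSpace Z] (Y : Set Z) (h : ℝ≥0 → ℝ≥0∞) : Prop where
  complete : CompleteSpace Z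
  separable : TopologicalSpace.SeparableSpace Z
  analytic : MeasureTheory.AnalyticSet Y
  hausdorff : IsHausdorffFunction h
  cont : Continuous h
  zero : h 0 = 0
  alt : FiniteOrder h ∨ FiniteStructuralDim Z ∨ ∀ x y z : Z, dist x z ≤ max (dist x y) (dist y z)

/-- Property (H∞): property (H) together with non-σ-finiteness of `Y` w.r.t. `H^h`. -/
def PropertyHInf {Z : Type*} [MetricSpace Z] (Y : Set Z) (h : ℝ≥0 → ℝ≥0∞) : Prop :=
  PropertyH Y h ∧ ¬ SigmaFiniteSet (hausdorffM h) Y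

/-- Property (Aκ): `X` is a union of κ-many measurable sets of finite measure, and
κ-many null sets always union to a null set. -/
def PropertyA {X : Type u} (μ : MeasureTheory.OuterMeasure X) (κ : Cardinal.{u}) : Prop :=
  (∃ (ι : Type u) (A : ι → Set X), Cardinal.mk ι = κ ∧ (⋃ i, A i) = Set.univ ∧
      ∀ i, μ.IsCaratheodory (A i) ∧ μ (A i) < ⊤) ∧
  ∀ (ι : Type u) (A : ι → Set X), Cardinal.mk ι = κ → (∀ i, μ (A i) = 0) → μ (⋃ i, A i) = 0

/-- A set is perfect if it is closed and every open set meeting it meets it in an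
infinite set. -/
def PerfectSet {X : Type*} [TopologicalSpace X] (C : Set X) : Prop :=
  IsClosed C ∧ ∀ O : Set X, IsOpen O → (O ∩ C).Nonempty → (O ∩ C).Infinite

/-- The gauge `d ↦ d^s`. -/
noncomputable def sGauge (s : ℝ≥0) : ℝ≥0 → ℝ≥0∞ := fun d => (d : ℝ≥0∞) ^ (s : ℝ)

/-- Hausdorff–Besicovitch dimension: the supremum of all `s ≥ 0` with `H^{d^s}(E) > 0`. -/
noncomputable def hDim {Z : Type*} [EMetricSpace Z] (E : Set Z) : ℝ≥0∞ :=
  ⨆ (s : ℝ≥0) (_ : 0 < hausdorffM (sGauge s) E), (s : ℝ≥0∞)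

set_option linter.unusedSectionVars false

namespace HM

section
variable {X : Type*} [MetricSpace X] [CompactSpace X]

/-- diameter as a nonnegative real -/
noncomputable def nd (U : Set X) : ℝ≥0 := (Metric.ediam U).toNNReal

lemma ediam_ne_top (U : Set X) : Metric.ediam U ≠ ⊤ :=
  Metric.isBounded_iff_ediam_ne_top.1 (Metric.isBounded_of_compactSpace)

lemma coe_nd (U : Set X) : (nd U : ℝ≥0∞) = Metric.ediam U :=
  ENNReal.coe_toNNReal (ediam_ne_top U)

lemma nd_mono {U V : Set X} (h : U ⊆ V) : nd U ≤ nd V := by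
  rw [← ENNReal.coe_le_coe, coe_nd, coe_nd]; exact Metric.ediam_mono h

lemma nd_le_iff {U : Set X} {t : ℝ≥0} : nd U ≤ t ↔ ∀ x ∈ U, ∀ y ∈ U, nndist x y ≤ t := by
  rw [← ENNReal.coe_le_coe, coe_nd, Metric.ediam_le_iff]
  simp only [edist_nndist, ENNReal.coe_le_coe]

lemma nndist_le_nd {U : Set X} {x y : X} (hx : x ∈ U) (hy : y ∈ U) : nndist x y ≤ nd U :=
  nd_le_iff.1 le_rfl x hx y hy

lemma nd_thick (U : Set X) (η : ℝ≥0) : nd (Metric.thickening (η : ℝ) U) ≤ nd U + 2 * η := by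
  rw [← ENNReal.coe_le_coe]; push_cast
  rw [coe_nd, coe_nd]; exact Metric.ediam_thickening_le η

lemma nd_closure (U : Set X) : nd (closure U) = nd U := by
  unfold nd; rw [Metric.ediam_closure]

@[simp] lemma nd_empty : nd (∅ : Set X) = 0 := by simp [nd]
@[simp] lemma nd_singleton (x : X) : nd ({x} : Set X) = 0 := by simp [nd]

/-- finite `k`-measure, via covers -/
def Fk (k : ℝ≥0 → ℝ≥0) (A : Set X) : Prop :=
  ∃ C : ℝ≥0, ∀ δ : ℝ≥0, 0 < δ → ∃ U : ℕ → Set X, A ⊆ ⋃ i, U i ∧ (∀ i, nd (U i) ≤ δ) ∧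
    ∑' i, (k (nd (U i)) : ℝ≥0∞) ≤ C

/-- sigma-finite -/
def SF (k : ℝ≥0 → ℝ≥0) (S : Set X) : Prop :=
  ∃ A : ℕ → Set X, S ⊆ ⋃ m, A m ∧ ∀ m, Fk k (A m)

lemma Fk.sf {k : ℝ≥0 → ℝ≥0} {A : Set X} (h : Fk k A) : SF k A :=
  ⟨fun _ => A, subset_iUnion (fun _ : ℕ => A) 0, fun _ => h⟩

lemma SF.mono {k : ℝ≥0 → ℝ≥0} {A B : Set X} (h : SF k B) (hAB : A ⊆ B) : SF k A := by
  obtain ⟨T, h1, h2⟩ := h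
  exact ⟨T, hAB.trans h1, h2⟩

lemma SF.iUnion {k : ℝ≥0 → ℝ≥0} {A : ℕ → Set X} (h : ∀ n, SF k (A n)) : SF k (⋃ n, A n) := by
  choose T h1 h2 using h
  refine ⟨fun p => T p.unpair.1 p.unpair.2, ?_, fun m => h2 _ _⟩
  intro x hx
  obtain ⟨n, hn⟩ := mem_iUnion.1 hx
  obtain ⟨m, hm⟩ := mem_iUnion.1 (h1 n hn)
  exact mem_iUnion.2 ⟨Nat.pair n m, by simpa using hm⟩

lemma SF.union {k : ℝ≥0 → ℝ≥0} {A B : Set X} (hA : SF k A) (hB : SF k B) : SF k (A ∪ B) := by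
  have := SF.iUnion (k := k) (A := fun n : ℕ => if n = 0 then A else B)
    (by intro n; by_cases hn : n = 0 <;> simp [hn, hA, hB])
  refine this.mono ?_
  rintro x (hx | hx)
  · exact mem_iUnion.2 ⟨0, by simpa using hx⟩
  · exact mem_iUnion.2 ⟨1, by simpa using hx⟩

lemma exists_sorted (a : ℕ → ℝ≥0∞) (b : ℝ≥0∞) (hb : b ≠ ⊤) (ha : ∑' i, a i ≤ b)
    (hpos : ∀ i, a i ≠ 0) :
    ∃ e : ℕ → ℕ, Function.Injective e ∧ ∀ i, ((e i : ℝ≥0∞) + 1) * a i ≤ b := by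
  have hT : ∑' i, a i ≠ ⊤ := ne_top_of_le_ne_top hb ha
  let T : ℕ → Set ℕ := fun i => {j | a i < a j ∨ (a j = a i ∧ j < i)}
  have hfin : ∀ i, (T i).Finite := by
    intro i
    refine (ENNReal.finite_const_le_of_tsum_ne_top hT (hpos i)).subset ?_
    rintro j (hj | hj)
    · exact hj.le
    · exact hj.1.ge
  have key : ∀ i j, i ∈ T j → (T i).ncard < (T j).ncard := by
    intro i j hij
    refine Set.ncard_lt_ncard ⟨?_, ?_⟩ (hfin j)
    · rintro l (hl | hl) <;> rcases hij with hij | hij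
      · exact Or.inl (hij.trans hl)
      · left; rw [← hij.1]; exact hl
      · left; rw [hl.1]; exact hij
      · right; exact ⟨hl.1.trans hij.1, hl.2.trans hij.2⟩
    · intro hsub
      rcases hsub hij with h | h
      · exact lt_irrefl _ h
      · exact lt_irrefl _ h.2
  refine ⟨fun i => (T i).ncard, ?_, ?_⟩
  · intro i j hij
    by_contra hne
    have : i ∈ T j ∨ j ∈ T i := by
      rcases lt_trichotomy (a i) (a j) with h | h | h
      · right; exact Or.inl h
      · rcases lt_or_gt_of_ne hne with h' | h'
        · left; exact Or.inr ⟨h, h'⟩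
        · right; exact Or.inr ⟨h.symm, h'⟩
      · left; exact Or.inl h
    rcases this with h | h
    · exact absurd hij (key _ _ h).ne
    · exact absurd hij (key _ _ h).ne'
  · intro i
    have hi : i ∉ (hfin i).toFinset := by
      simp [T]
    have h1 : (insert i (hfin i).toFinset).card • a i ≤ ∑ j ∈ insert i (hfin i).toFinset, a j := by
      refine Finset.card_nsmul_le_sum _ _ _ ?_
      intro j hj
      rcases Finset.mem_insert.1 hj with rfl | hj
      · exact le_rfl
      · rcases (hfin i).mem_toFinset.1 hj with h | h
        · exact h.le
        · exact h.1.ge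
    rw [Finset.card_insert_of_notMem hi, ← Set.ncard_eq_toFinset_card _ (hfin i)] at h1
    refine le_trans ?_ ((h1.trans (ENNReal.sum_le_tsum _)).trans ha)
    rw [nsmul_eq_mul]; push_cast; exact le_rfl

open TopologicalSpace in
lemma exists_sorted_cover [Nonempty X] (g : ℝ≥0 → ℝ≥0) (g0 : g 0 = 0) (E : Set X)
    (U : ℕ → Set X) (hU : E ⊆ ⋃ i, U i) (b : ℝ≥0∞) (hb : b ≠ ⊤)
    (hs : ∑' i, (g (nd (U i)) : ℝ≥0∞) < b) :
    ∃ W : ℕ → NonemptyCompacts X, E ⊆ ⋃ i, (W i : Set X) ∧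
      ∑' i, (g (nd (W i : Set X)) : ℝ≥0∞) ≤ b ∧
      ∀ i : ℕ, ((i : ℝ≥0∞) + 1) * g (nd (W i : Set X)) ≤ b := by
  classical
  obtain ⟨x0⟩ := ‹Nonempty X›
  let P : NonemptyCompacts X := ⟨⟨{x0}, isCompact_singleton⟩, singleton_nonempty x0⟩
  obtain ⟨ε, hε, hεs⟩ := ENNReal.exists_pos_sum_of_countable (ε := b - ∑' i, (g (nd (U i)) : ℝ≥0∞))
    (tsub_pos_of_lt hs).ne' ℕ
  have hsum : ∑' i, ((g (nd (U i)) : ℝ≥0∞) + ε i) ≤ b := by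
    rw [ENNReal.tsum_add]
    calc _ ≤ ∑' i, (g (nd (U i)) : ℝ≥0∞) + (b - ∑' i, (g (nd (U i)) : ℝ≥0∞)) := by gcongr
      _ = b := add_tsub_cancel_of_le hs.le
  obtain ⟨e, einj, he⟩ := exists_sorted _ b hb hsum (by
    intro i; have := (hε i).ne'; simp [this])
  let V : ℕ → NonemptyCompacts X := fun i =>
    if h : (U i).Nonempty then ⟨⟨closure (U i), isClosed_closure.isCompact⟩, h.closure⟩ else P
  have hV : ∀ i, U i ⊆ V i := by
    intro i
    by_cases h : (U i).Nonempty
    · simp only [V, h, dif_pos]; exact subset_closure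
    · rw [not_nonempty_iff_eq_empty] at h; rw [h]; exact empty_subset _
  have hVg : ∀ i, g (nd (V i : Set X)) = g (nd (U i)) := by
    intro i
    by_cases h : (U i).Nonempty
    · simp only [V, h, dif_pos]
      change g (nd (closure (U i))) = _
      rw [nd_closure]
    · simp only [V, h, dif_neg, not_false_eq_true]
      rw [not_nonempty_iff_eq_empty] at h; rw [h]
      change g (nd {x0}) = _
      simp
  have hP : g (nd (P : Set X)) = 0 := by
    change g (nd {x0}) = _
    simp [g0]
  let W : ℕ → NonemptyCompacts X := Function.extend e V (fun _ => P)
  have hWe : ∀ i, W (e i) = V i := fun i => einj.extend_apply _ _ _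
  have hW' : ∀ j, (g (nd (W j : Set X)) : ℝ≥0∞)
      = Function.extend e (fun i => (g (nd (U i)) : ℝ≥0∞)) 0 j := by
    intro j
    by_cases h : ∃ i, e i = j
    · obtain ⟨i, rfl⟩ := h
      rw [hWe, einj.extend_apply, hVg]
    · have : W j = P := Function.extend_apply' _ _ _ h
      rw [this, hP, Function.extend_apply' _ _ _ h]; simp
  refine ⟨W, ?_, ?_, ?_⟩
  · intro x hx
    obtain ⟨i, hi⟩ := mem_iUnion.1 (hU hx)
    exact mem_iUnion.2 ⟨e i, by rw [hWe]; exact hV i hi⟩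
  · rw [tsum_congr hW', tsum_extend_zero einj]; exact hs.le
  · intro j
    by_cases h : ∃ i, e i = j
    · obtain ⟨i, rfl⟩ := h
      rw [hWe, hVg]
      refine le_trans ?_ (he i)
      gcongr; exact le_self_add
    · have : W j = P := Function.extend_apply' _ _ _ h
      rw [this, hP]; simp

/-- transition function -/
noncomputable def mm (δ t : ℝ≥0) : ℝ≥0 := max (1/2) (min 1 (t/δ))

lemma mm_cont (δ : ℝ≥0) : Continuous (mm δ) := by
  unfold mm; fun_prop
lemma mm_mono (δ : ℝ≥0) : Monotone (mm δ) := by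
  intro a b h; unfold mm; gcongr
lemma mm_le (δ t : ℝ≥0) : mm δ t ≤ 1 := by
  unfold mm; refine max_le ?_ (min_le_left _ _)
  exact half_le_self zero_le_one
lemma le_mm (δ t : ℝ≥0) : 1/2 ≤ mm δ t := le_max_left _ _
lemma mm_big {δ t : ℝ≥0} (hδ : 0 < δ) (h : δ ≤ t) : mm δ t = 1 := by
  unfold mm
  rw [min_eq_left ((one_le_div hδ).2 h), max_eq_right]
  exact half_le_self zero_le_one
lemma mm_small {δ t : ℝ≥0} (hδ : 0 < δ) (h : t ≤ δ/2) : mm δ t = 1/2 := by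
  unfold mm
  apply max_eq_left
  refine (min_le_right _ _).trans ?_
  rw [div_le_iff₀ hδ]; simpa [div_eq_mul_inv, mul_comm] using h

/-- content at least `c` away from sigma-finite sets -/
def PP (X : Type*) [MetricSpace X] [CompactSpace X] (k g : ℝ≥0 → ℝ≥0) (c : ℝ≥0∞) : Prop :=
  ∀ S : Set X, SF k S → ∀ U : ℕ → Set X, Sᶜ ⊆ ⋃ i, U i → c ≤ ∑' i, (g (nd (U i)) : ℝ≥0∞)

lemma PP_init {k : ℝ≥0 → ℝ≥0} (km : Monotone k) (kp : ∀ t, 0 < t → 0 < k t)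
    (hX : ¬ SF k (univ : Set X)) : ∃ c : ℝ≥0∞, 0 < c ∧ PP X k k c := by
  by_contra hcon
  push Not at hcon
  have : ∀ n : ℕ, ∃ S : Set X, SF k S ∧ ∃ U : ℕ → Set X, Sᶜ ⊆ ⋃ i, U i ∧
      ∑' i, (k (nd (U i)) : ℝ≥0∞) < ((n : ℝ≥0∞) + 1)⁻¹ := by
    intro n
    have := hcon ((n : ℝ≥0∞) + 1)⁻¹ (by simp)
    unfold PP at this; push Not at this
    exact this
  choose S hS U hU hUs using this
  apply hX
  have h1 : Fk k (⋃ n, S n)ᶜ := by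
    refine ⟨1, fun δ hδ => ?_⟩
    have hk : (k δ : ℝ≥0∞) ≠ 0 := by simpa using (kp δ hδ).ne'
    obtain ⟨n, hn⟩ := ENNReal.exists_inv_nat_lt hk
    have hn1 : ((n : ℝ≥0∞) + 1)⁻¹ ≤ (n : ℝ≥0∞)⁻¹ := ENNReal.inv_le_inv.2 le_self_add
    refine ⟨U n, ?_, ?_, ?_⟩
    · refine subset_trans ?_ (hU n)
      exact compl_subset_compl.2 (subset_iUnion S n)
    · intro i
      by_contra hlt
      push Not at hlt
      have h2 : (k δ : ℝ≥0∞) ≤ k (nd (U n i)) := ENNReal.coe_le_coe.2 (km hlt.le)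
      have h3 := ENNReal.le_tsum (f := fun i => (k (nd (U n i)) : ℝ≥0∞)) i
      exact absurd (h2.trans (h3.trans ((hUs n).le.trans hn1))) (not_le.2 hn)
    · refine (hUs n).le.trans ?_
      simp
  refine ((SF.iUnion hS).union h1.sf).mono ?_
  rw [union_compl_self]

lemma exists_thick {g : ℝ≥0 → ℝ≥0} (gc : Continuous g) (gm : Monotone g) (F : Set X) {ε : ℝ≥0}
    (hε : 0 < ε) {η : ℝ≥0} (hη : 0 < η) : ∃ O : Set X, IsOpen O ∧ F ⊆ O ∧
      (∃ r : ℝ, 0 < r ∧ O = Metric.thickening r F) ∧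
      g (nd O) ≤ g (nd F) + ε ∧ nd O ≤ nd F + η := by
  have h1 : ∀ᶠ s in 𝓝 (nd F), g s < g (nd F) + ε :=
    gc.continuousAt.eventually (gt_mem_nhds (lt_add_of_pos_right _ hε))
  have h2 : Tendsto (fun r : ℝ≥0 => nd F + 2 * r) (𝓝[>] 0) (𝓝 (nd F)) := by
    have : Continuous (fun r : ℝ≥0 => nd F + 2 * r) := by fun_prop
    have := this.tendsto 0
    simp only [mul_zero, add_zero] at this
    exact this.mono_left nhdsWithin_le_nhds
  have h3 : ∀ᶠ s in 𝓝 (nd F), s < nd F + η := gt_mem_nhds (lt_add_of_pos_right _ hη)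
  obtain ⟨r, ⟨hr1, hr3⟩, hr2⟩ := (((h2.eventually h1).and (h2.eventually h3)).and
    self_mem_nhdsWithin).exists
  have hr : (0:ℝ) < r := by exact_mod_cast hr2
  exact ⟨Metric.thickening r F, Metric.isOpen_thickening, Metric.self_subset_thickening hr F,
    ⟨r, hr, rfl⟩, (gm (nd_thick F r)).trans hr1.le, (nd_thick F r).trans hr3.le⟩

end
end HM
namespace HM
section
variable {X : Type*} [MetricSpace X] [CompactSpace X]

open TopologicalSpace in
lemma NC_sub_thick {A B : NonemptyCompacts X} {r : ℝ} (h : dist A B < r) :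
    (A : Set X) ⊆ Metric.thickening r (B : Set X) := by
  intro x hx
  have hne : Metric.hausdorffEDist (A : Set X) (B : Set X) ≠ ⊤ :=
    Metric.hausdorffEDist_ne_top_of_nonempty_of_bounded A.nonempty B.nonempty
      Metric.isBounded_of_compactSpace Metric.isBounded_of_compactSpace
  obtain ⟨y, hy, hxy⟩ := Metric.exists_dist_lt_of_hausdorffDist_lt hx h hne
  exact Metric.mem_thickening_iff.2 ⟨y, hy, hxy⟩

lemma PP_step [Nonempty X] {k g : ℝ≥0 → ℝ≥0} (kp : ∀ t, 0 < t → 0 < k t)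
    (gc : Continuous g) (gm : Monotone g) (g0 : g 0 = 0)
    {a : ℝ≥0} (ha : 0 < a) (hag : ∀ t, a * k t ≤ g t) {c c' : ℝ≥0∞} (hP : PP X k g c)
    (hc : c' < c) {η : ℝ≥0} (hη : 0 < η) :
    ∃ δ : ℝ≥0, 0 < δ ∧ δ ≤ η ∧ PP X k (fun t => g t * mm δ t) c' := by
  classical
  by_contra hcon
  push Not at hcon
  have hc't : c' ≠ ⊤ := hc.ne_top
  let d : ℕ → ℝ≥0 := fun n => η / ((n : ℝ≥0) + 1)
  have hd0 : ∀ n, 0 < d n := fun n => by positivity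
  have hdη : ∀ n, d n ≤ η := fun n => div_le_self (by positivity) (by simp)
  have hdlim : ∀ s : ℝ≥0, 0 < s → ∀ᶠ n in atTop, d n ≤ s := by
    intro s hs
    have h1 : Tendsto d atTop (𝓝 0) := by
      have := (tendsto_one_div_add_atTop_nhds_zero_nat (𝕜 := ℝ≥0)).const_mul η
      simpa [d, div_eq_mul_inv] using this
    exact (h1.eventually (gt_mem_nhds hs)).mono fun n h => h.le
  have : ∀ n : ℕ, ∃ S : Set X, SF k S ∧ ∃ U : ℕ → Set X, Sᶜ ⊆ ⋃ i, U i ∧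
      ∑' i, ((g (nd (U i)) * mm (d n) (nd (U i)) : ℝ≥0) : ℝ≥0∞) < c' := by
    intro n
    have := hcon (d n) (hd0 n) (hdη n)
    unfold PP at this; push Not at this
    exact this
  choose S hS U hU hUs using this
  have hE : ∀ n, (⋃ n, S n)ᶜ ⊆ ⋃ i, U n i := fun n =>
    (compl_subset_compl.2 (subset_iUnion S n)).trans (hU n)
  choose W hW1 hW2 hW3 using fun n => exists_sorted_cover
    (fun t => g t * mm (d n) t) (by simp [g0]) _ (U n) (hE n) c' hc't (hUs n)
  obtain ⟨F, ψ, hψ, hlim⟩ := CompactSpace.tendsto_subseq W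
  have hconv : ∀ i (r : ℝ), 0 < r → ∀ᶠ n in atTop, dist (W (ψ n) i) (F i) < r := by
    intro i r hr
    have := (tendsto_pi_nhds.1 hlim i)
    exact (Metric.tendsto_nhds.1 this) r hr
  -- limit cost
  have hFi : ∀ i (ε : ℝ≥0), 0 < ε → ∀ᶠ n in atTop,
      g (nd (F i : Set X)) ≤ g (nd (W (ψ n) i : Set X)) * mm (d (ψ n)) (nd (W (ψ n) i : Set X)) + ε := by
    intro i ε hε
    rcases eq_or_lt_of_le (zero_le (a := nd (F i : Set X))) with h0 | hpos
    · rw [← h0, g0]; exact Eventually.of_forall fun _ => zero_le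
    · have h1 : ∀ᶠ s in 𝓝 (nd (F i : Set X)), g (nd (F i : Set X)) < g s + ε := by
        have : Continuous fun s => g s + ε := by fun_prop
        exact this.continuousAt.eventually (lt_mem_nhds (lt_add_of_pos_right _ hε))
      have h2 : Tendsto (fun r : ℝ≥0 => nd (F i : Set X) - 2 * r) (𝓝[>] 0) (𝓝 (nd (F i : Set X))) := by
        have : Continuous (fun r : ℝ≥0 => nd (F i : Set X) - 2 * r) := by fun_prop
        have := this.tendsto 0
        simp only [mul_zero, tsub_zero] at this
        exact this.mono_left nhdsWithin_le_nhds
      obtain ⟨r, ⟨hr1, hr2⟩, hr3⟩ := (((h2.eventually h1).and (h2.eventually (lt_mem_nhds hpos))).and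
        self_mem_nhdsWithin).exists
      have hr : (0 : ℝ) < r := by exact_mod_cast hr3
      have h5 := hψ.tendsto_atTop.eventually (hdlim _ hr2)
      filter_upwards [hconv i r hr, h5] with n hn h5
      rw [dist_comm] at hn
      have h3 : nd (F i : Set X) ≤ nd (W (ψ n) i : Set X) + 2 * r :=
        (nd_mono (NC_sub_thick hn)).trans (nd_thick _ _)
      have h4 : nd (F i : Set X) - 2 * r ≤ nd (W (ψ n) i : Set X) := tsub_le_iff_right.2 h3
      rw [mm_big (hd0 _) (h5.trans h4), mul_one]
      exact hr1.le.trans (by gcongr; exact gm h4)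
  have hFsum : ∑' i, (g (nd (F i : Set X)) : ℝ≥0∞) ≤ c' := by
    rw [ENNReal.tsum_eq_iSup_sum]
    refine iSup_le fun T => ?_
    refine ENNReal.le_of_forall_pos_le_add fun ε hε _ => ?_
    have hε' : 0 < ε / ((T.card : ℝ≥0) + 1) := by positivity
    have hev := (Finset.eventually_all T).2 (fun i _ => hFi i _ hε')
    obtain ⟨n, hn⟩ := hev.exists
    calc ∑ i ∈ T, (g (nd (F i : Set X)) : ℝ≥0∞)
        ≤ ∑ i ∈ T, (((g (nd (W (ψ n) i : Set X)) * mm (d (ψ n)) (nd (W (ψ n) i : Set X)) : ℝ≥0) : ℝ≥0∞)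
            + (ε / ((T.card : ℝ≥0) + 1) : ℝ≥0)) := by
          refine Finset.sum_le_sum fun i hi => ?_
          exact_mod_cast hn i hi
      _ ≤ c' + ε := by
          rw [Finset.sum_add_distrib]
          refine add_le_add ((ENNReal.sum_le_tsum T).trans (hW2 (ψ n))) ?_
          rw [Finset.sum_const, nsmul_eq_mul]
          norm_cast
          rw [mul_div_assoc', div_le_iff₀ (by positivity)]
          rw [mul_comm]; gcongr; simp
  -- thickening
  obtain ⟨ε, hε, hεs⟩ := ENNReal.exists_pos_sum_of_countable (ε := c - c') (tsub_pos_of_lt hc).ne' ℕ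
  choose O hO1 hO2 hO3 hO4 _ using fun i => exists_thick gc gm (F i : Set X) (hε i) zero_lt_one
  have hOW : ∀ i, ∀ᶠ n in atTop, (W (ψ n) i : Set X) ⊆ O i := by
    intro i
    obtain ⟨r, hr, hOr⟩ := hO3 i
    filter_upwards [hconv i r hr] with n hn
    rw [hOr]; exact NC_sub_thick hn
  have hfin : Fk k ((⋃ n, S n)ᶜ \ ⋃ i, O i) := by
    refine ⟨(2 / a) * c'.toNNReal, fun δ hδ => ?_⟩
    have hgδ : 0 < g δ := lt_of_lt_of_le (mul_pos ha (kp δ hδ)) (hag δ)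
    obtain ⟨N, hN⟩ : ∃ N : ℕ, 2 * c'.toNNReal < (N + 1) * g δ := by
      obtain ⟨N, hN⟩ := exists_nat_gt (2 * c'.toNNReal / g δ)
      refine ⟨N, ?_⟩
      rw [div_lt_iff₀ hgδ] at hN
      refine hN.trans_le ?_
      gcongr; simp
    have hev := (Finset.eventually_all (Finset.range N)).2 (fun i _ => hOW i)
    obtain ⟨n, hn⟩ := hev.exists
    refine ⟨fun i => if i < N then ∅ else (W (ψ n) i : Set X), ?_, ?_, ?_⟩
    · rintro x ⟨hx1, hx2⟩
      obtain ⟨i, hi⟩ := mem_iUnion.1 (hW1 (ψ n) hx1)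
      refine mem_iUnion.2 ⟨i, ?_⟩
      have : ¬ i < N := fun h => hx2 (mem_iUnion.2 ⟨i, hn i (Finset.mem_range.2 h) hi⟩)
      simpa [this] using hi
    · intro i
      by_cases h : i < N
      · simp [h]
      · simp only [h, if_false]
        by_contra hlt
        push Not at hlt
        have h1 := hW3 (ψ n) i
        rw [← ENNReal.coe_toNNReal hc't] at h1
        have h1 : ((i : ℝ≥0) + 1) * (g (nd (W (ψ n) i : Set X)) * mm (d (ψ n)) (nd (W (ψ n) i : Set X)))
          ≤ c'.toNNReal := by exact_mod_cast h1
        have h2 : ((N : ℝ≥0) + 1) * (g δ * (1/2)) ≤ c'.toNNReal := by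
          refine le_trans ?_ h1
          have : (N : ℝ≥0) ≤ i := by exact_mod_cast not_lt.1 h
          gcongr
          · exact gm hlt.le
          · exact le_mm _ _
        have h3 : ((N : ℝ≥0) + 1) * g δ ≤ 2 * c'.toNNReal := by
          calc ((N : ℝ≥0) + 1) * g δ = 2 * (((N : ℝ≥0) + 1) * (g δ * (1/2))) := by
                field_simp
            _ ≤ _ := by gcongr
        exact absurd hN (not_lt.2 h3)
    · calc _ ≤ ∑' i, ((2 / a : ℝ≥0) : ℝ≥0∞) *
            ((g (nd (W (ψ n) i : Set X)) * mm (d (ψ n)) (nd (W (ψ n) i : Set X)) : ℝ≥0) : ℝ≥0∞) := by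
            refine ENNReal.tsum_le_tsum fun i => ?_
            norm_cast
            have hk0 : k 0 = 0 := by
              have := hag 0
              rw [g0] at this
              have := le_antisymm this zero_le
              rcases mul_eq_zero.1 this with h | h
              · exact absurd h ha.ne'
              · exact h
            by_cases h : i < N
            · simp [h, hk0]
            · simp only [h, if_false]
              have h1 := hag (nd (W (ψ n) i : Set X))
              have h2 := le_mm (d (ψ n)) (nd (W (ψ n) i : Set X))
              calc k (nd (W (ψ n) i : Set X)) = 2 / a * ((a * k (nd (W (ψ n) i : Set X))) * (1/2)) := by
                    field_simp
                _ ≤ _ := by gcongr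
        _ ≤ _ := by
            rw [ENNReal.tsum_mul_left, ENNReal.coe_mul, ENNReal.coe_toNNReal hc't]
            gcongr
            exact hW2 (ψ n)
  have := hP _ ((SF.iUnion hS).union hfin.sf) O (by
    intro x hx
    by_contra hxO
    apply hx
    by_cases hxS : x ∈ ⋃ n, S n
    · exact Or.inl hxS
    · exact Or.inr ⟨hxS, hxO⟩)
  have h2 : ∑' i, (g (nd (O i)) : ℝ≥0∞) < c := by
    calc _ ≤ ∑' i, ((g (nd (F i : Set X)) : ℝ≥0∞) + ε i) :=
          ENNReal.tsum_le_tsum fun i => by exact_mod_cast hO4 i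
      _ = ∑' i, (g (nd (F i : Set X)) : ℝ≥0∞) + ∑' i, (ε i : ℝ≥0∞) := ENNReal.tsum_add
      _ < c' + (c - c') := ENNReal.add_lt_add_of_le_of_lt
          (ne_top_of_le_ne_top hc't hFsum) hFsum hεs
      _ = c := add_tsub_cancel_of_le hc.le
  exact absurd this (not_le.2 h2)

lemma dep_seq {α : Type*} (Q : ℕ → α → Prop) (R : ℕ → α → α → Prop) (h0 : ∃ x, Q 0 x)
    (hs : ∀ n x, Q n x → ∃ y, Q (n+1) y ∧ R n x y) :
    ∃ f : ℕ → α, (∀ n, Q n (f n)) ∧ ∀ n, R n (f n) (f (n+1)) := by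
  choose! s hs1 hs2 using hs
  obtain ⟨x, hx⟩ := h0
  let f : ℕ → α := fun n => Nat.rec x (fun n y => s n y) n
  have hf : ∀ n, Q n (f n) := by
    intro n
    induction n with
    | zero => exact hx
    | succ n ih => exact hs1 n _ ih
  exact ⟨f, hf, fun n => hs2 n _ (hf n)⟩

/-- content -/
noncomputable def content (X : Type*) [MetricSpace X] (g : ℝ≥0 → ℝ≥0) (g0 : g 0 = 0) :
    OuterMeasure X :=
  OuterMeasure.ofFunction (fun U : Set X => (g (nd U) : ℝ≥0∞)) (by simp [nd, g0])

lemma stepA [Nonempty X] {k : ℝ≥0 → ℝ≥0} (kc : Continuous k) (km : Monotone k) (k0 : k 0 = 0)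
    (kp : ∀ t, 0 < t → 0 < k t) (hX : ¬ SF k (univ : Set X)) :
    ∃ φ : ℝ≥0 → ℝ≥0, Monotone φ ∧ (∀ t, φ (3 * t) ≤ 2 * φ t) ∧
      (∀ ε : ℝ≥0, 0 < ε → ∃ δ : ℝ≥0, 0 < δ ∧ ∀ t ≤ δ, φ t ≤ ε) ∧
      ∃ c : ℝ≥0, 0 < c ∧ ∀ g0, c ≤ content X (fun t => φ t * k t) g0 univ := by
  classical
  obtain ⟨c1, hc1, hP1⟩ := PP_init km kp hX
  obtain ⟨c, hc, hcc1⟩ := ENNReal.lt_iff_exists_nnreal_btwn.1 hc1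
  let Q : ℕ → (ℝ≥0 → ℝ≥0) × ℝ≥0 → Prop := fun n p =>
    Continuous p.1 ∧ Monotone p.1 ∧ (∀ t, p.1 (3 * t) ≤ 2 * p.1 t) ∧ 0 < p.2 ∧ p.2 ≤ (1/2)^n ∧
      (∀ t ≤ p.2, p.1 t = (1/2)^n) ∧ ∃ c' : ℝ≥0∞, c < c' ∧ PP X k (fun t => p.1 t * k t) c'
  let R : ℕ → (ℝ≥0 → ℝ≥0) × ℝ≥0 → (ℝ≥0 → ℝ≥0) × ℝ≥0 → Prop := fun n p q =>
    (∀ t, p.2 ≤ t → q.1 t = p.1 t) ∧ (∀ t, q.1 t ≤ p.1 t) ∧ q.2 ≤ p.2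
  obtain ⟨f, hQ, hR⟩ := dep_seq Q R
    ⟨(fun _ => 1, 1), by
      refine ⟨continuous_const, monotone_const, fun t => ?_, one_pos, by simp, by simp, c1, hcc1, ?_⟩
      · simp
      · simpa using hP1⟩
    (by
      rintro n ⟨φ, a⟩ ⟨h1, h2, h3, h4, h5, h6, c', h7, h8⟩
      dsimp only at h1 h2 h3 h4 h5 h6 h8
      obtain ⟨c'', hc1, hc2⟩ := exists_between h7
      have hlow : ∀ t, (1/2)^n ≤ φ t := fun t => by
        rw [← h6 0 zero_le]; exact h2 zero_le
      obtain ⟨δ, hδ0, hδ1, hδ2⟩ := PP_step (a := (1/2)^n) (η := a / 3) kp (h1.mul kc) (h2.mul' km) (by simp [k0])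
        (by positivity) (fun t => mul_le_mul' (hlow t) le_rfl) h8 hc2 (by positivity)
      have hδa : δ ≤ a := hδ1.trans (div_le_self zero_le (by norm_num))
      refine ⟨(fun t => φ t * mm δ t, δ / 2), ⟨?_, ?_, ?_, ?_, ?_, ?_, c'', hc1, ?_⟩, ?_, ?_, ?_⟩
      · exact h1.mul (mm_cont δ)
      · exact h2.mul' (mm_mono δ)
      · intro t
        change φ (3 * t) * mm δ (3 * t) ≤ 2 * (φ t * mm δ t)
        rcases le_total δ t with h | h
        · rw [mm_big hδ0 h]
          calc _ ≤ (2 * φ t) * 1 := mul_le_mul' (h3 t) (mm_le _ _)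
            _ = _ := by ring
        · have h3t : 3 * t ≤ a := by
            calc 3 * t ≤ 3 * (a / 3) := by gcongr; exact h.trans hδ1
              _ = a := by field_simp
          rw [h6 _ h3t, h6 _ (h.trans hδa)]
          calc (1/2)^n * mm δ (3 * t) ≤ (1/2)^n * 1 := by gcongr; exact mm_le _ _
            _ = 2 * ((1/2)^n * (1/2)) := by field_simp
            _ ≤ _ := by gcongr; exact le_mm _ _
      · positivity
      · change δ / 2 ≤ _
        rw [pow_succ, div_eq_mul_one_div]
        gcongr
        exact hδa.trans h5
      · intro t ht
        change t ≤ δ / 2 at ht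
        change φ t * mm δ t = _
        rw [mm_small hδ0 ht, h6 t ((ht.trans (half_le_self zero_le)).trans hδa), pow_succ]
      · convert hδ2 using 2
        simp only [Pi.mul_apply]; ring
      · intro t ht
        change φ t * mm δ t = φ t
        rw [mm_big hδ0 (hδa.trans ht), mul_one]
      · intro t
        exact mul_le_of_le_one_right zero_le (mm_le _ _)
      · exact (half_le_self zero_le).trans hδa)
  have hanti : ∀ t, Antitone fun n => (f n).1 t := fun t => antitone_nat_of_succ_le fun n => (hR n).2.1 t
  have hanti2 : Antitone fun n => (f n).2 := antitone_nat_of_succ_le fun n => (hR n).2.2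
  let φ : ℝ≥0 → ℝ≥0 := fun t => ⨅ n, (f n).1 t
  have hφle : ∀ n t, φ t ≤ (f n).1 t := fun n t => ciInf_le (OrderBot.bddBelow _) n
  have hstab : ∀ N t, (f N).2 ≤ t → ∀ n, N ≤ n → (f n).1 t = (f N).1 t := by
    intro N t ht n hn
    induction n, hn using Nat.le_induction with
    | base => rfl
    | succ n hn ih => rw [(hR n).1 t ((hanti2 hn).trans ht), ih]
  have hφeq : ∀ N t, (f N).2 ≤ t → φ t = (f N).1 t := by
    intro N t ht
    refine le_antisymm (hφle N t) (le_ciInf fun n => ?_)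
    rcases le_total N n with h | h
    · rw [hstab N t ht n h]
    · exact hanti t h
  have hex : ∀ t : ℝ≥0, 0 < t → ∃ N, (f N).2 ≤ t := by
    intro t ht
    obtain ⟨N, hN⟩ := NNReal.exists_pow_lt_of_lt_one ht (show (1/2 : ℝ≥0) < 1 by norm_num)
    exact ⟨N, ((hQ N).2.2.2.2.1).trans hN.le⟩
  have hφmono : Monotone φ := by
    intro s t hst
    exact ciInf_mono (OrderBot.bddBelow _) fun n => (hQ n).2.1 hst
  have hφc : Continuous fun t => φ t * k t := by
    rw [continuous_iff_continuousAt]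
    intro t
    rcases eq_or_lt_of_le (zero_le (a := t)) with rfl | hpos
    · have hle : ∀ s, φ s * k s ≤ (f 0).1 s * k s := fun s => mul_le_mul' (hφle 0 s) le_rfl
      unfold ContinuousAt
      simp only [k0, mul_zero]
      have hk := ((hQ 0).1.mul kc).tendsto 0
      simp only [Pi.mul_apply, k0, mul_zero] at hk
      exact tendsto_of_tendsto_of_tendsto_of_le_of_le tendsto_const_nhds hk (fun _ => zero_le) hle
    · obtain ⟨N, hN⟩ := hex (t/2) (by positivity)
      have : (fun t => φ t * k t) =ᶠ[𝓝 t] fun t => (f N).1 t * k t := by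
        filter_upwards [lt_mem_nhds (half_lt_self hpos)] with s hs
        rw [hφeq N s (hN.trans hs.le)]
      exact (((hQ N).1.mul kc).continuousAt).congr this.symm
  refine ⟨φ, hφmono, ?_, ?_, c, by exact_mod_cast hc, ?_⟩
  · intro t
    rcases eq_or_lt_of_le (zero_le (a := t)) with rfl | hpos
    · rw [mul_zero]; exact le_mul_of_one_le_left zero_le (by norm_num)
    · obtain ⟨N, hN⟩ := hex t hpos
      rw [hφeq N t hN]
      exact (hφle N _).trans ((hQ N).2.2.1 t)
  · intro ε hε
    obtain ⟨N, hN⟩ := NNReal.exists_pow_lt_of_lt_one hε (show (1/2 : ℝ≥0) < 1 by norm_num)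
    refine ⟨(f N).2, (hQ N).2.2.2.1, fun t ht => ?_⟩
    refine (hφle N t).trans ?_
    rw [(hQ N).2.2.2.2.2.1 t ht]; exact hN.le
  · intro g0
    unfold content
    rw [OuterMeasure.ofFunction_apply]
    refine le_iInf fun U => le_iInf fun hU => ?_
    refine ENNReal.le_of_forall_pos_le_add fun ε hε _ => ?_
    obtain ⟨ε', hε', hεs⟩ := ENNReal.exists_pos_sum_of_countable (ε := ε) (by simpa using hε.ne') ℕ
    choose O hO1 hO2 _ hO4 _ using fun i => exists_thick hφc (hφmono.mul' km) (U i) (hε' i) zero_lt_one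
    obtain ⟨T, hT⟩ := isCompact_univ.elim_finite_subcover O hO1
      (hU.trans (iUnion_mono hO2))
    have hN : ∃ N, ∀ i ∈ T, (f N).1 (nd (O i)) * k (nd (O i)) = φ (nd (O i)) * k (nd (O i)) := by
      have : ∀ i ∈ T, ∀ᶠ N in atTop, (f N).1 (nd (O i)) * k (nd (O i)) = φ (nd (O i)) * k (nd (O i)) := by
        intro i _
        rcases eq_or_lt_of_le (zero_le (a := nd (O i))) with h0 | hpos
        · rw [← h0, k0]; simp
        · obtain ⟨N, hN⟩ := hex _ hpos
          filter_upwards [eventually_ge_atTop N] with n hn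
          rw [hφeq n _ ((hanti2 hn).trans hN)]
      exact ((Finset.eventually_all T).2 this).exists
    obtain ⟨N, hN⟩ := hN
    obtain ⟨c', hc', hPP⟩ := (hQ N).2.2.2.2.2.2
    have h1 := hPP ∅ ⟨fun _ => ∅, by simp, fun _ => ⟨0, fun δ hδ => ⟨fun _ => ∅, by simp, by simp, by simp [k0]⟩⟩⟩
      (fun i => if i ∈ T then O i else ∅) (by
        rw [compl_empty]
        intro x hx
        obtain ⟨i, hi⟩ := mem_iUnion.1 (hT hx)
        obtain ⟨hi1, hi2⟩ := mem_iUnion.1 hi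
        exact mem_iUnion.2 ⟨i, by simpa [hi1] using hi2⟩)
    refine (hc'.le.trans h1).trans ?_
    calc _ ≤ ∑' i, (((φ (nd (U i)) * k (nd (U i)) : ℝ≥0) : ℝ≥0∞) + ε' i) := by
          refine ENNReal.tsum_le_tsum fun i => ?_
          by_cases hi : i ∈ T
          · simp only [hi, if_true]
            rw [hN i hi]
            exact_mod_cast hO4 i
          · simp [hi, k0]
      _ ≤ _ := by
          rw [ENNReal.tsum_add]; gcongr

end
end HM
namespace HM
section
variable {X : Type*} [MetricSpace X] [CompactSpace X]

/-- enlargement property -/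
def Enl (X : Type*) [MetricSpace X] (g : ℝ≥0 → ℝ≥0) (g0 : g 0 = 0) (C : ℝ≥0) : Prop :=
  ∀ U : Set X, IsOpen U → U.Nonempty →
    content X g g0 (⋃₀ {V | IsOpen V ∧ (V ∩ U).Nonempty ∧ nd V ≤ nd U}) ≤ C * g (nd U)

lemma greedy (n : ℕ) : ∀ t : Finset (Set X), t.card = n → (∀ U ∈ t, U.Nonempty) →
    ∃ u ⊆ t, (∀ a ∈ u, ∀ b ∈ u, a ≠ b → Disjoint a b) ∧
      ∀ a ∈ t, ∃ b ∈ u, (a ∩ b).Nonempty ∧ nd a ≤ nd b := by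
  classical
  induction n using Nat.strong_induction_on with
  | _ n ih =>
    intro t htn hne
    rcases t.eq_empty_or_nonempty with rfl | ht
    · exact ⟨∅, by simp⟩
    obtain ⟨b, hb, hmax⟩ := t.exists_max_image nd ht
    have hbb : ¬ Disjoint b b := by
      rw [Set.not_disjoint_iff_nonempty_inter, inter_self]; exact hne b hb
    let t' := t.filter (fun a => Disjoint a b)
    have hlt : t'.card < n := by
      rw [← htn]
      apply Finset.card_lt_card
      refine Finset.filter_ssubset.2 ⟨b, hb, hbb⟩
    obtain ⟨u, hu, hd, hc⟩ := ih _ hlt t' rfl (fun U hU => hne U (Finset.mem_filter.1 hU).1)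
    have hub : ∀ a ∈ u, Disjoint a b := fun a ha => (Finset.mem_filter.1 (hu ha)).2
    refine ⟨insert b u, ?_, ?_, ?_⟩
    · intro x hx
      rcases Finset.mem_insert.1 hx with rfl | hx
      · exact hb
      · exact (Finset.mem_filter.1 (hu hx)).1
    · intro a ha a' ha' hne'
      rcases Finset.mem_insert.1 ha with h1 | h1 <;> rcases Finset.mem_insert.1 ha' with h2 | h2
      · exact absurd (h1.trans h2.symm) hne'
      · rw [h1]; exact (hub _ h2).symm
      · rw [h2]; exact hub _ h1
      · exact hd _ h1 _ h2 hne'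
    · intro a ha
      by_cases hab : Disjoint a b
      · obtain ⟨b', hb', h1⟩ := hc a (Finset.mem_filter.2 ⟨ha, hab⟩)
        exact ⟨b', Finset.mem_insert_of_mem hb', h1⟩
      · exact ⟨b, Finset.mem_insert_self _ _, Set.not_disjoint_iff_nonempty_inter.1 hab, hmax a ha⟩

lemma weighted [Nonempty X] {g : ℝ≥0 → ℝ≥0} {g0 : g 0 = 0} {C c : ℝ≥0} (hE : Enl X g g0 C)
    (hc : c ≤ content X g g0 univ) (n : ℕ) :
    ∀ (t : Finset (Set X)) (w : Set X → ℝ) (b : ℝ), t.card = n → (∀ U ∈ t, IsOpen U) →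
      (∀ U ∈ t, 0 ≤ w U) → (∀ x, b ≤ ∑ U ∈ t, w U * U.indicator (fun _ => (1:ℝ)) x) →
      b * c ≤ C * ∑ U ∈ t, w U * g (nd U) := by
  classical
  induction n with
  | zero =>
    intro t w b ht ho hw hb
    obtain rfl := Finset.card_eq_zero.1 ht
    have := hb (Classical.arbitrary X)
    simp only [Finset.sum_empty] at this ⊢
    rw [mul_zero]
    exact mul_nonpos_of_nonpos_of_nonneg this c.2
  | succ n ih =>
    intro t w b ht ho hw hb
    have hR : 0 ≤ (C:ℝ) * ∑ U ∈ t, w U * g (nd U) :=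
      mul_nonneg C.2 (Finset.sum_nonneg fun U hU => mul_nonneg (hw U hU) (g _).2)
    rcases le_or_gt b 0 with hb0 | hb0
    · exact (mul_nonpos_of_nonpos_of_nonneg hb0 c.2).trans hR
    let t' := t.filter (fun U => 0 < w U ∧ U.Nonempty)
    obtain ⟨u, hu, hd, hcv⟩ := greedy _ t' rfl (fun U hU => (Finset.mem_filter.1 hU).2.2)
    have hut : ∀ U ∈ u, U ∈ t := fun U hU => (Finset.mem_filter.1 (hu hU)).1
    have hcov : (univ : Set X) ⊆ ⋃ U ∈ u, ⋃₀ {V | IsOpen V ∧ (V ∩ U).Nonempty ∧ nd V ≤ nd U} := by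
      intro x _
      have : ∃ U ∈ t, 0 < w U * U.indicator (fun _ => (1:ℝ)) x := by
        by_contra hcon
        push Not at hcon
        have := (hb x).trans (Finset.sum_nonpos hcon)
        linarith
      obtain ⟨V, hV, hpos⟩ := this
      have hxV : x ∈ V := by
        by_contra h; simp [h] at hpos
      have hwV : 0 < w V := by simpa [hxV] using hpos
      obtain ⟨U, hU, h1, h2⟩ := hcv V (Finset.mem_filter.2 ⟨hV, hwV, ⟨x, hxV⟩⟩)
      exact mem_biUnion hU ⟨V, ⟨ho V hV, h1, h2⟩, hxV⟩
    have hcu : (c:ℝ≥0∞) ≤ ((C * ∑ U ∈ u, g (nd U) : ℝ≥0) : ℝ≥0∞) := by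
      calc (c:ℝ≥0∞) ≤ content X g g0 univ := hc
        _ ≤ content X g g0 (⋃ U ∈ u, ⋃₀ {V | IsOpen V ∧ (V ∩ U).Nonempty ∧ nd V ≤ nd U}) :=
            measure_mono hcov
        _ ≤ ∑ U ∈ u, content X g g0 (⋃₀ {V | IsOpen V ∧ (V ∩ U).Nonempty ∧ nd V ≤ nd U}) :=
            measure_biUnion_finset_le _ _
        _ ≤ ∑ U ∈ u, (C:ℝ≥0∞) * g (nd U) := Finset.sum_le_sum fun U hU =>
            hE U (ho U (hut U hU)) (Finset.mem_filter.1 (hu hU)).2.2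
        _ = _ := by push_cast; rw [Finset.mul_sum]
    have hcu' : (c:ℝ) ≤ C * ∑ U ∈ u, (g (nd U) : ℝ) := by
      have := ENNReal.coe_le_coe.1 hcu
      exact_mod_cast this
    have hune : u.Nonempty := by
      obtain ⟨U, hU, -⟩ := mem_iUnion₂.1 (hcov (mem_univ (Classical.arbitrary X)))
      exact ⟨U, hU⟩
    obtain ⟨u0, hu0, hmin⟩ := u.exists_min_image w hune
    set ε := w u0 with hε
    have hε0 : 0 < ε := (Finset.mem_filter.1 (hu hu0)).2.1
    let w' : Set X → ℝ := fun U => w U - if U ∈ u then ε else 0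
    have hw'0 : w' u0 = 0 := by simp [w', hu0, hε]
    have hw'n : ∀ U ∈ t, 0 ≤ w' U := by
      intro U hU
      by_cases h : U ∈ u
      · simp only [w', h, if_true]; linarith [hmin U h]
      · simp only [w', h, if_false, sub_zero]; exact hw U hU
    have key : ∀ F : Set X → ℝ, ∑ U ∈ t.erase u0, w' U * F U =
        ∑ U ∈ t, w U * F U - ε * ∑ U ∈ u, F U := by
      intro F
      have h1 : ∑ U ∈ t.erase u0, w' U * F U = ∑ U ∈ t, w' U * F U :=
        Finset.sum_erase _ (by rw [hw'0, zero_mul])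
      have h2 : ∑ U ∈ u, F U = ∑ U ∈ t, if U ∈ u then F U else 0 := by
        rw [← Finset.sum_filter]
        congr 1
        ext U; simp only [Finset.mem_filter]
        exact ⟨fun h => ⟨hut U h, h⟩, fun h => h.2⟩
      rw [h1, h2, Finset.mul_sum, ← Finset.sum_sub_distrib]
      refine Finset.sum_congr rfl fun U _ => ?_
      by_cases h : U ∈ u <;> simp [w', h, sub_mul]
    have hind : ∀ x, ∑ U ∈ u, U.indicator (fun _ => (1:ℝ)) x ≤ 1 := by
      intro x
      by_cases hx : ∃ U ∈ u, x ∈ U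
      · obtain ⟨U, hU, hxU⟩ := hx
        rw [Finset.sum_eq_single U]
        · simp [hxU]
        · intro V hV hVU
          have := hd V hV U hU hVU
          exact indicator_of_notMem (fun hxV => Set.disjoint_left.1 this hxV hxU) _
        · exact fun h => absurd hU h
      · push Not at hx
        rw [Finset.sum_eq_zero (fun U hU => indicator_of_notMem (hx U hU) _)]
        exact zero_le_one
    have hIH := ih (t.erase u0) w' (b - ε)
      (by rw [Finset.card_erase_of_mem (hut _ hu0), ht]; rfl)
      (fun U hU => ho U (Finset.mem_of_mem_erase hU))
      (fun U hU => hw'n U (Finset.mem_of_mem_erase hU))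
      (fun x => by
        rw [key (fun U => U.indicator (fun _ => (1:ℝ)) x)]
        have := mul_le_mul_of_nonneg_left (hind x) hε0.le
        linarith [hb x])
    rw [key (fun U => (g (nd U):ℝ))] at hIH
    have := mul_le_mul_of_nonneg_left hcu' hε0.le
    nlinarith

open TopologicalSpace in
/-- indicator combination -/
noncomputable def Lind : (Opens X →₀ ℝ) →ₗ[ℝ] (X → ℝ) :=
  Finsupp.linearCombination ℝ (fun U : Opens X => (U : Set X).indicator (fun _ => (1:ℝ)))

open TopologicalSpace in
/-- cost -/
noncomputable def Lcost (g : ℝ≥0 → ℝ≥0) : (Opens X →₀ ℝ) →ₗ[ℝ] ℝ :=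
  Finsupp.linearCombination ℝ (fun U : Opens X => (g (nd (U : Set X)) : ℝ))

open TopologicalSpace in
lemma weighted' [Nonempty X] {g : ℝ≥0 → ℝ≥0} {g0 : g 0 = 0} {C c : ℝ≥0} (hE : Enl X g g0 C)
    (hc : c ≤ content X g g0 univ) (w : Opens X →₀ ℝ) (hw : 0 ≤ w) (hb : ∀ x, 1 ≤ Lind w x) :
    (c:ℝ) ≤ C * Lcost g w := by
  classical
  let e : Opens X ↪ Set X := ⟨fun U => (U : Set X), SetLike.coe_injective⟩
  let w' : Set X → ℝ := fun S => if h : IsOpen S then w ⟨S, h⟩ else 0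
  have hw' : ∀ U : Opens X, w' (e U) = w U := fun U => by
    have h : IsOpen (e U) := U.2
    simp only [w', h, dif_pos]; rfl
  have := weighted hE hc _ (w.support.map e) w' 1 rfl
    (by
      intro U hU; obtain ⟨V, -, rfl⟩ := Finset.mem_map.1 hU; exact V.2)
    (by
      intro U hU; obtain ⟨V, -, rfl⟩ := Finset.mem_map.1 hU; rw [hw']; exact hw V)
    (by
      intro x
      refine (hb x).trans_eq ?_
      simp only [Finset.sum_map, hw']
      simp only [Lind, Finsupp.linearCombination_apply, Finsupp.sum, Finset.sum_apply,
        Pi.smul_apply, smul_eq_mul]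
      rfl)
  simp only [Finset.sum_map, hw', one_mul] at this
  simp only [Lcost, Finsupp.linearCombination_apply, Finsupp.sum, smul_eq_mul]
  exact this

end
end HM
namespace HM
section
variable {X : Type*} [MetricSpace X] [CompactSpace X]

open TopologicalSpace in
lemma frostman_fun [Nonempty X] {g : ℝ≥0 → ℝ≥0} {g0 : g 0 = 0} {C c : ℝ≥0} (hE : Enl X g g0 C)
    (hc : c ≤ content X g g0 univ) (hc0 : 0 < c) :
    ∃ ℓ : C(X, ℝ) →ₗ[ℝ] ℝ, (∀ f, 0 ≤ f → 0 ≤ ℓ f) ∧ 0 < ℓ 1 ∧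
      ∀ U : Opens X, ∀ f : C(X, ℝ), (∀ x, f x ≤ (U : Set X).indicator (fun _ => (1:ℝ)) x) →
        ℓ f ≤ g (nd (U : Set X)) := by
  classical
  set c' : ℝ := c / (C + 1) with hc'
  have hC1 : (0:ℝ) < C + 1 := by positivity
  have hc'0 : 0 < c' := div_pos (by exact_mod_cast hc0) hC1
  have Lcost_nonneg : ∀ w : Opens X →₀ ℝ, 0 ≤ w → 0 ≤ Lcost g w := by
    intro w hw
    simp only [Lcost, Finsupp.linearCombination_apply, Finsupp.sum, smul_eq_mul]
    exact Finset.sum_nonneg fun U _ => mul_nonneg (hw U) (g _).2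
  let B : Set C(X, ℝ) := {f | ∃ w : Opens X →₀ ℝ, 0 ≤ w ∧ Lcost g w < c' ∧
    ∃ ε : ℝ, 0 < ε ∧ ∀ x, f x + ε ≤ Lind w x}
  have hBc : Convex ℝ B := by
    rintro f ⟨w, hw, hwc, ε, hε, hf⟩ f' ⟨w', hw', hwc', ε', hε', hf'⟩ a b ha hb hab
    refine ⟨a • w + b • w', ?_, ?_, min ε ε', lt_min hε hε', ?_⟩
    · exact add_nonneg (smul_nonneg ha hw) (smul_nonneg hb hw')
    · rw [map_add, map_smul, map_smul, smul_eq_mul, smul_eq_mul]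
      have : a * c' + b * c' = c' := by rw [← add_mul, hab, one_mul]
      rcases ha.eq_or_lt with rfl | ha
      · have : b = 1 := by linarith
        subst this; simpa using hwc'
      · nlinarith [mul_lt_mul_of_pos_left hwc ha, mul_le_mul_of_nonneg_left hwc'.le hb]
    · intro x
      rw [map_add, map_smul, map_smul]
      simp only [ContinuousMap.add_apply, ContinuousMap.smul_apply, Pi.add_apply, Pi.smul_apply,
        smul_eq_mul]
      have h1 : f x + min ε ε' ≤ Lind w x := by linarith [hf x, min_le_left ε ε']
      have h2 : f' x + min ε ε' ≤ Lind w' x := by linarith [hf' x, min_le_right ε ε']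
      have h3 : min ε ε' = a * min ε ε' + b * min ε ε' := by rw [← add_mul, hab, one_mul]
      nlinarith [mul_le_mul_of_nonneg_left h1 ha, mul_le_mul_of_nonneg_left h2 hb]
  have hBo : IsOpen B := by
    rw [Metric.isOpen_iff]
    rintro f ⟨w, hw, hwc, ε, hε, hf⟩
    refine ⟨ε / 2, half_pos hε, ?_⟩
    intro f' hf'
    refine ⟨w, hw, hwc, ε / 2, half_pos hε, fun x => ?_⟩
    have h1 := (ContinuousMap.dist_apply_le_dist (f := f') (g := f) x).trans_lt (Metric.mem_ball.1 hf')
    rw [Real.dist_eq] at h1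
    have := (abs_lt.1 h1).2
    linarith [hf x]
  have h1B : (1 : C(X, ℝ)) ∉ B := by
    rintro ⟨w, hw, hwc, ε, hε, hf⟩
    have h1 := weighted' hE hc w hw (fun x => by
      have := hf x
      simp only [ContinuousMap.one_apply] at this
      linarith)
    have h2 := Lcost_nonneg w hw
    have h3 : (c:ℝ) = c' * (C + 1) := by rw [hc']; field_simp
    nlinarith
  obtain ⟨ℓ, hℓ⟩ := geometric_hahn_banach_open_point hBc hBo h1B
  have hmem : ∀ f : C(X, ℝ), 0 ≤ f → -f - 1 ∈ B := by
    intro f hf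
    refine ⟨0, le_rfl, by simpa using hc'0, 1, one_pos, fun x => ?_⟩
    have : 0 ≤ f x := hf x
    simp only [ContinuousMap.sub_apply, ContinuousMap.neg_apply, ContinuousMap.one_apply, map_zero,
      Pi.zero_apply]
    linarith
  have hl1 : 0 < ℓ 1 := by
    have := hℓ _ (hmem 0 le_rfl)
    simp at this
    linarith
  have hpos : ∀ f : C(X, ℝ), 0 ≤ f → 0 ≤ ℓ f := by
    intro f hf
    by_contra hneg
    push Not at hneg
    have := hℓ _ (hmem ((2 * ℓ 1 / (-ℓ f)) • f) (smul_nonneg (by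
      apply div_nonneg <;> linarith) hf))
    rw [map_sub, map_neg, map_smul, smul_eq_mul] at this
    have h2 : 2 * ℓ 1 / (-ℓ f) * ℓ f = - (2 * ℓ 1) := by
      have : ℓ f ≠ 0 := hneg.ne
      field_simp
    rw [h2] at this
    linarith
  have hbd : ∀ U : Opens X, ∀ f : C(X, ℝ), (∀ x, f x ≤ (U : Set X).indicator (fun _ => (1:ℝ)) x) →
      ℓ f * c' ≤ 2 * ℓ 1 * g (nd (U : Set X)) := by
    intro U f hf
    by_contra hcon
    push Not at hcon
    have hg0 : (0:ℝ) ≤ g (nd (U : Set X)) := (g _).2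
    have hf0 : 0 < ℓ f := by
      by_contra h
      push Not at h
      nlinarith [mul_nonneg hl1.le hg0, mul_nonneg (neg_nonneg.2 h) hc'0.le]
    set s := 2 * ℓ 1 / ℓ f with hs
    have hs0 : 0 ≤ s := by positivity
    have : s • f - 1 ∈ B := by
      refine ⟨Finsupp.single U s, Finsupp.single_nonneg.2 hs0, ?_, 1, one_pos, fun x => ?_⟩
      · rw [Lcost, Finsupp.linearCombination_single, smul_eq_mul, hs, div_mul_eq_mul_div,
          div_lt_iff₀ hf0]
        linarith
      · rw [Lind, Finsupp.linearCombination_single]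
        simp only [ContinuousMap.sub_apply, ContinuousMap.smul_apply, ContinuousMap.one_apply,
          Pi.smul_apply, smul_eq_mul]
        linarith [mul_le_mul_of_nonneg_left (hf x) hs0]
    have := hℓ _ this
    rw [map_sub, map_smul, smul_eq_mul, hs, div_mul_cancel₀ _ hf0.ne'] at this
    linarith
  refine ⟨(c' / (2 * ℓ 1)) • (ℓ : C(X, ℝ) →ₗ[ℝ] ℝ), fun f hf => ?_, ?_, fun U f hf => ?_⟩
  · exact mul_nonneg (by positivity) (hpos f hf)
  · exact mul_pos (by positivity) hl1
  · have := hbd U f hf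
    change c' / (2 * ℓ 1) * ℓ f ≤ _
    rw [div_mul_eq_mul_div, div_le_iff₀ (by positivity)]
    linarith

lemma frostman [Nonempty X] [MeasurableSpace X] [BorelSpace X] {g : ℝ≥0 → ℝ≥0} {g0 : g 0 = 0}
    {C c : ℝ≥0} (hE : Enl X g g0 C) (hc : c ≤ content X g g0 univ) (hc0 : 0 < c) :
    ∃ μ : Measure X, IsFiniteMeasure μ ∧ μ univ ≠ 0 ∧ ∀ U, IsOpen U → μ U ≤ g (nd U) := by
  obtain ⟨ℓ, hpos, h1, hU⟩ := frostman_fun hE hc hc0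
  let L : CompactlySupportedContinuousMap X ℝ →ₗ[ℝ] ℝ :=
    { toFun := fun f => ℓ f.toContinuousMap
      map_add' := fun f f' => by rw [← map_add]; rfl
      map_smul' := fun a f => by
        rw [RingHom.id_apply, ← map_smul]; rfl }
  let Λ : CompactlySupportedContinuousMap X ℝ →ₚ[ℝ] ℝ := PositiveLinearMap.mk₀ L
    (fun f hf => hpos _ hf)
  have hmain : ∀ U, IsOpen U → RealRMK.rieszMeasure Λ U ≤ g (nd U) := by
    intro U hUo
    rw [hUo.measure_eq_iSup_isCompact]
    refine iSup₂_le fun K hKU => iSup_le fun hK => ?_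
    obtain ⟨f, hf0, hf1, hf⟩ := exists_continuous_zero_one_of_isClosed hUo.isClosed_compl hK.isClosed
      (disjoint_left.2 fun x hx hx' => hx (hKU hx'))
    let fc : CompactlySupportedContinuousMap X ℝ := ⟨f, HasCompactSupport.of_compactSpace f⟩
    refine (RealRMK.rieszMeasure_le_of_eq_one Λ (f := fc) (fun x => (hf x).1) hK (fun x hx => hf1 hx)).trans ?_
    rw [← ENNReal.ofReal_coe_nnreal]
    apply ENNReal.ofReal_le_ofReal
    refine hU ⟨U, hUo⟩ f fun x => ?_
    by_cases hx : x ∈ U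
    · simpa [hx] using (hf x).2
    · simpa [hx] using (hf0 hx).le
  refine ⟨RealRMK.rieszMeasure Λ, ⟨(hmain univ isOpen_univ).trans_lt ENNReal.coe_lt_top⟩, ?_, hmain⟩
  intro h0
  let fc : CompactlySupportedContinuousMap X ℝ := ⟨1, HasCompactSupport.of_compactSpace _⟩
  have := RealRMK.integral_rieszMeasure Λ fc
  rw [Measure.measure_univ_eq_zero.1 h0, integral_zero_measure] at this
  exact h1.ne this

end
end HM
namespace HM
section
variable {X : Type*} [MetricSpace X] [CompactSpace X] [MeasurableSpace X] [BorelSpace X]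

lemma fin_part {ρ : ℝ} (hρ : 0 < ρ) : ∃ (n : ℕ) (P : Fin n → Set X), (∀ i, MeasurableSet (P i)) ∧
    Pairwise (Function.onFun Disjoint P) ∧ (⋃ i, P i) = univ ∧
      ∀ i, ∀ x ∈ P i, ∀ y ∈ P i, dist x y < ρ := by
  obtain ⟨t, -, htf, ht⟩ := (isCompact_univ (X := X)).finite_cover_balls (half_pos hρ)
  obtain ⟨n, f, hf⟩ : ∃ (n : ℕ) (f : Fin n → X), range f = t := by
    have := htf.fin_param
    obtain ⟨n, f, -, h⟩ := this
    exact ⟨n, f, h⟩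
  let U : Fin n → Set X := fun i => Metric.ball (f i) (ρ / 2)
  refine ⟨n, fun i => U i \ ⋃ j < i, U j, fun i => ?_, ?_, ?_, ?_⟩
  · exact Metric.isOpen_ball.measurableSet.diff
      (MeasurableSet.iUnion fun j => MeasurableSet.iUnion fun _ => Metric.isOpen_ball.measurableSet)
  · have key : ∀ i j : Fin n, i < j → Disjoint (U i \ ⋃ l < i, U l) (U j \ ⋃ l < j, U l) := by
      intro i j hij
      refine disjoint_left.2 fun x hx hx' => hx'.2 ?_
      exact mem_iUnion₂.2 ⟨i, hij, hx.1⟩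
    intro i j hij
    rcases lt_or_gt_of_ne hij with h | h
    · exact key i j h
    · exact (key j i h).symm
  · rw [eq_univ_iff_forall]
    intro x
    have hex : ∃ i, x ∈ U i := by
      obtain ⟨y, hy, hxy⟩ := mem_iUnion₂.1 (ht (mem_univ x))
      rw [← hf] at hy
      obtain ⟨i, rfl⟩ := hy
      exact ⟨i, hxy⟩
    classical
    obtain ⟨i, hi, hmin⟩ := (Finset.univ.filter (fun i => x ∈ U i)).exists_min_image id
      (by obtain ⟨i, hi⟩ := hex; exact ⟨i, by simpa using hi⟩)
    refine mem_iUnion.2 ⟨i, by simpa using hi, ?_⟩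
    intro hx
    obtain ⟨j, hj, hxj⟩ := mem_iUnion₂.1 hx
    exact absurd (hmin j (by simpa using hxj)) (not_le.2 hj)
  · intro i x hx y hy
    have h1 := Metric.mem_ball.1 hx.1
    have h2 := Metric.mem_ball'.1 hy.1
    linarith [dist_triangle x (f i) y]

/-- sets of small diameter have small measure -/
def Small (ν : Measure X) : Prop :=
  ∀ ε : ℝ≥0, 0 < ε → ∃ δ : ℝ≥0, 0 < δ ∧ ∀ U : Set X, nd U ≤ δ → ν U ≤ ε

lemma halve {ν : Measure X} [IsFiniteMeasure ν] (hs : Small ν) {P : Set X} (hP : MeasurableSet P) :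
    ∃ M ⊆ P, MeasurableSet M ∧ ν.real P ≤ 4 * ν.real M ∧ ν.real P ≤ 4 * ν.real (P \ M) := by
  classical
  rcases eq_or_ne (ν.real P) 0 with h0 | h0
  · exact ⟨∅, empty_subset _, MeasurableSet.empty, by simp [h0]⟩
  have hpos : 0 < ν.real P := lt_of_le_of_ne measureReal_nonneg h0.symm
  obtain ⟨δ, hδ, hsm⟩ := hs (ν.real P / 4).toNNReal (by
    rw [Real.toNNReal_pos]; positivity)
  obtain ⟨n, Q, hQm, hQd, hQu, hQ⟩ := fin_part (X := X) (ρ := δ) (by exact_mod_cast hδ)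
  have hQs : ∀ i, ν.real (Q i) ≤ ν.real P / 4 := by
    intro i
    have := hsm (Q i) (nd_le_iff.2 fun x hx y hy => by
      rw [← NNReal.coe_le_coe, coe_nndist]; exact (hQ i x hx y hy).le)
    exact ENNReal.toReal_le_of_le_ofReal (by positivity) this
  let F : Finset (Fin n) → ℝ := fun s => ν.real (P ∩ ⋃ i ∈ s, Q i)
  have hFu : F Finset.univ = ν.real P := by simp [F, hQu]
  obtain ⟨s, hs1, hmin⟩ := (Finset.univ.filter (fun s => ν.real P / 4 ≤ F s)).exists_min_image
    Finset.card ⟨Finset.univ, by simp only [Finset.mem_filter, Finset.mem_univ, true_and, hFu]; linarith⟩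
  have hs2 : ν.real P / 4 ≤ F s := (Finset.mem_filter.1 hs1).2
  have hsne : s.Nonempty := by
    rw [Finset.nonempty_iff_ne_empty]
    rintro rfl
    simp [F] at hs2
    linarith
  obtain ⟨a, ha⟩ := hsne
  have herase : F (s.erase a) < ν.real P / 4 := by
    by_contra hcon
    push Not at hcon
    have := hmin (s.erase a) (by simp only [Finset.mem_filter, Finset.mem_univ, true_and]; exact hcon)
    have h2 := Finset.card_erase_lt_of_mem ha
    omega
  have hupper : F s ≤ ν.real P / 2 := by
    have hsub : P ∩ ⋃ i ∈ s, Q i ⊆ (P ∩ ⋃ i ∈ s.erase a, Q i) ∪ Q a := by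
      rintro x ⟨hxP, hx⟩
      obtain ⟨i, hi, hxi⟩ := mem_iUnion₂.1 hx
      by_cases hia : i = a
      · subst hia; exact Or.inr hxi
      · exact Or.inl ⟨hxP, mem_iUnion₂.2 ⟨i, Finset.mem_erase.2 ⟨hia, hi⟩, hxi⟩⟩
    have h1 : F s ≤ F (s.erase a) + ν.real (Q a) :=
      (measureReal_mono hsub).trans (measureReal_union_le _ _)
    linarith [hQs a]
  have hMm : MeasurableSet (P ∩ ⋃ i ∈ s, Q i) := hP.inter (s.measurableSet_biUnion fun i _ => hQm i)
  refine ⟨P ∩ ⋃ i ∈ s, Q i, inter_subset_left, hMm, by linarith, ?_⟩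
  rw [measureReal_sdiff inter_subset_left hMm]
  change _ ≤ 4 * (ν.real P - F s)
  linarith

lemma cpt_in {ν : Measure X} [IsFiniteMeasure ν] {K : Set X} (hK : IsCompact K) (hKν : ν Kᶜ = 0)
    {P M : Set X} (hM : MeasurableSet M) (h : ν.real P ≤ 4 * ν.real M) :
    ∃ A ⊆ M ∩ K, IsCompact A ∧ ν P ≤ 8 * ν A := by
  have hMK : ν (M ∩ K) = ν M := by
    refine le_antisymm (measure_mono inter_subset_left) ?_
    calc ν M ≤ ν ((M ∩ K) ∪ Kᶜ) := measure_mono (fun x hx => by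
            by_cases hxK : x ∈ K
            · exact Or.inl ⟨hx, hxK⟩
            · exact Or.inr hxK)
      _ ≤ ν (M ∩ K) + ν Kᶜ := measure_union_le _ _
      _ = ν (M ∩ K) := by rw [hKν, add_zero]
  have h' : ν P ≤ 4 * ν M := by
    have : ENNReal.ofReal (ν.real P) ≤ ENNReal.ofReal (4 * ν.real M) := ENNReal.ofReal_le_ofReal h
    rw [ENNReal.ofReal_mul (by norm_num), ofReal_measureReal, ofReal_measureReal] at this
    simpa using this
  rcases eq_or_ne (ν M) 0 with h0 | h0
  · refine ⟨∅, empty_subset _, isCompact_empty, ?_⟩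
    rw [h0] at h'; simpa using h'
  · have hlt : ν M / 2 < ν (M ∩ K) := by
      rw [hMK]; exact ENNReal.half_lt_self h0 (measure_ne_top _ _)
    obtain ⟨A, hA, hAc, hAν⟩ := (hM.inter hK.measurableSet).exists_lt_isCompact_of_ne_top
      (measure_ne_top _ _) hlt
    refine ⟨A, hA, hAc, h'.trans ?_⟩
    have h2 : ν M ≤ 2 * ν A := by
      have := ENNReal.div_le_iff_le_mul (a := ν M) (b := 2) (c := ν A) (by simp) (by simp)
      rw [mul_comm]; exact this.1 hAν.le
    calc 4 * ν M ≤ 4 * (2 * ν A) := by gcongr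
      _ = 8 * ν A := by rw [← mul_assoc]; norm_num

lemma spread {ν : Measure X} [IsFiniteMeasure ν] {ρ : ℝ} {n : ℕ} {P A : Fin n → Set X}
    (hPm : ∀ i, MeasurableSet (P i)) (hPd : Pairwise (Function.onFun Disjoint P))
    (hPu : (⋃ i, P i) = univ) (hP : ∀ i, ∀ x ∈ P i, ∀ y ∈ P i, dist x y < ρ)
    (hAP : ∀ i, A i ⊆ P i) (hAc : ∀ i, IsCompact (A i)) (hA : ∀ i, ν (P i) ≤ 8 * ν (A i)) :
    ∃ ν' : Measure X, ν' (⋃ i, A i)ᶜ = 0 ∧ (∀ U, ν' U ≤ 8 * ν U) ∧ ν' univ = ν univ ∧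
      ∀ U, ν' U ≤ ν (Metric.thickening ρ U) := by
  have hsum : ∀ S, ∑ i, ν (S ∩ P i) = ν S := by
    intro S
    have h1 : ν.restrict S (⋃ i, P i) = ∑' i, ν.restrict S (P i) := measure_iUnion hPd hPm
    rw [hPu, Measure.restrict_apply_univ, tsum_fintype] at h1
    rw [h1]
    refine Finset.sum_congr rfl fun i _ => ?_
    rw [Measure.restrict_apply (hPm i), inter_comm]
  have hcA : ∀ i, ν (P i) / ν (A i) * ν (A i) = ν (P i) := by
    intro i
    rcases eq_or_ne (ν (A i)) 0 with h0 | h0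
    · have := hA i
      rw [h0, mul_zero] at this
      rw [h0, mul_zero, le_antisymm this (zero_le)]
    · exact ENNReal.div_mul_cancel h0 (measure_ne_top _ _)
  have happ : ∀ S, (∑ i, (ν (P i) / ν (A i)) • ν.restrict (A i)) S =
      ∑ i, ν (P i) / ν (A i) * ν (S ∩ A i) := by
    intro S
    rw [Measure.finsetSum_apply]
    refine Finset.sum_congr rfl fun i _ => ?_
    rw [Measure.smul_apply, Measure.restrict_apply' (hAc i).measurableSet, smul_eq_mul]
  refine ⟨∑ i, (ν (P i) / ν (A i)) • ν.restrict (A i), ?_, ?_, ?_, ?_⟩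
  · rw [happ]
    refine Finset.sum_eq_zero fun i _ => ?_
    have : (⋃ i, A i)ᶜ ∩ A i = ∅ := by
      ext x; simp only [mem_inter_iff, mem_compl_iff, mem_iUnion, mem_empty_iff_false, iff_false]
      rintro ⟨h1, h2⟩; exact h1 ⟨i, h2⟩
    rw [this, measure_empty, mul_zero]
  · intro U
    rw [happ, ← hsum U, Finset.mul_sum]
    refine Finset.sum_le_sum fun i _ => ?_
    gcongr
    · exact ENNReal.div_le_of_le_mul (hA i)
    · exact hAP i
  · rw [happ, ← hsum univ]
    refine Finset.sum_congr rfl fun i _ => ?_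
    rw [univ_inter, univ_inter, hcA]
  · intro U
    rw [happ, ← hsum (Metric.thickening ρ U)]
    refine Finset.sum_le_sum fun i _ => ?_
    rcases (U ∩ A i).eq_empty_or_nonempty with h | ⟨x, hxU, hxA⟩
    · rw [h, measure_empty, mul_zero]; exact zero_le
    · calc ν (P i) / ν (A i) * ν (U ∩ A i) ≤ ν (P i) / ν (A i) * ν (A i) := by
            gcongr; exact inter_subset_right
        _ = ν (P i) := hcA i
        _ ≤ ν (Metric.thickening ρ U ∩ P i) := measure_mono fun y hy => ⟨Metric.mem_thickening_iff.2
            ⟨x, hxU, hP i y hy x (hAP i hxA)⟩, hy⟩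

/-- a state of the construction -/
structure St (X : Type*) [MetricSpace X] [MeasurableSpace X] where
  ν : Measure X
  K : Set X
  fin : IsFiniteMeasure ν
  cpt : IsCompact K
  null : ν Kᶜ = 0
  small : Small ν

/-- refinement -/
structure Ref (ρ : ℝ) (s s' : St X) : Prop where
  sub : s'.K ⊆ s.K
  le : ∀ U, s'.ν U ≤ 8 * s.ν U
  mass : s'.ν univ = s.ν univ
  thick : ∀ U, s'.ν U ≤ s.ν (Metric.thickening ρ U)

lemma split (s : St X) {ρ : ℝ} (hρ : 0 < ρ) :
    ∃ c : Bool → St X, (∀ b, Ref ρ s (c b)) ∧ Disjoint (c true).K (c false).K := by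
  obtain ⟨n, P, hPm, hPd, hPu, hP⟩ := fin_part (X := X) hρ
  have := s.fin
  choose M hMP hMm hM1 hM2 using fun i => halve s.small (hPm i)
  choose A hA hAc hAν using fun i => cpt_in s.cpt s.null (hMm i) (hM1 i)
  choose B hB hBc hBν using fun i => cpt_in s.cpt s.null ((hPm i).diff (hMm i)) (hM2 i)
  have hAP : ∀ i, A i ⊆ P i := fun i x hx => hMP i (hA i hx).1
  have hBP : ∀ i, B i ⊆ P i := fun i x hx => (hB i hx).1.1
  have mk : ∀ A : Fin n → Set X, (∀ i, A i ⊆ P i) → (∀ i, A i ⊆ s.K) → (∀ i, IsCompact (A i)) →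
      (∀ i, s.ν (P i) ≤ 8 * s.ν (A i)) → ∃ s' : St X, Ref ρ s s' ∧ s'.K = ⋃ i, A i := by
    intro A hAP hAK hAc hAν
    obtain ⟨ν', h1, h2, h3, h4⟩ := spread hPm hPd hPu hP hAP hAc hAν
    refine ⟨⟨ν', ⋃ i, A i, ⟨?_⟩, isCompact_iUnion hAc, h1, ?_⟩, ⟨iUnion_subset hAK, h2, h3, h4⟩, rfl⟩
    · rw [h3]; exact measure_lt_top _ _
    · intro ε hε
      obtain ⟨δ, hδ, h⟩ := s.small (ε / 8) (by positivity)
      refine ⟨δ, hδ, fun U hU => (h2 U).trans ?_⟩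
      calc 8 * s.ν U ≤ 8 * ((ε / 8 : ℝ≥0) : ℝ≥0∞) := by gcongr; exact h U hU
        _ = ((8 * (ε / 8) : ℝ≥0) : ℝ≥0∞) := by push_cast; rfl
        _ ≤ ε := by rw [mul_div_cancel₀ _ (by norm_num)]
  obtain ⟨s1, hs1, hK1⟩ := mk A hAP (fun i x hx => (hA i hx).2) hAc hAν
  obtain ⟨s2, hs2, hK2⟩ := mk B hBP (fun i x hx => (hB i hx).2) hBc hBν
  refine ⟨fun b => if b then s1 else s2, ?_, ?_⟩
  · intro b; cases b <;> simp [hs1, hs2]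
  · simp only [if_true, Bool.false_eq_true, if_false, hK1, hK2]
    refine disjoint_left.2 fun x hx hx' => ?_
    obtain ⟨i, hi⟩ := mem_iUnion.1 hx
    obtain ⟨j, hj⟩ := mem_iUnion.1 hx'
    by_cases hij : i = j
    · subst hij; exact (hB i hj).1.2 (hA i hi).1
    · exact disjoint_left.1 (hPd hij) (hAP i hi) (hBP j hj)

end
end HM
namespace HM
section

lemma sum_rho (r : ℕ → ℝ≥0) (hr : ∀ j, 0 < r j) :
    ∃ ρ : ℕ → ℝ≥0, (∀ j, 0 < ρ j) ∧ ∀ j n, ∑ i ∈ Finset.Ico j n, ρ i ≤ r j := by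
  have hne : ∀ i, (Finset.range (i+1)).Nonempty := fun i => ⟨0, by simp⟩
  refine ⟨fun i => (Finset.range (i+1)).inf' (hne i) r * (1/2)^(i+1), fun j => ?_, fun j n => ?_⟩
  · refine mul_pos ((Finset.lt_inf'_iff _).2 fun i _ => hr i) (by positivity)
  · have hs : ∀ n : ℕ, ∑ i ∈ Finset.range n, ((1:ℝ≥0)/2)^(i+1) + (1/2)^n = 1 := by
      intro n
      induction n with
      | zero => simp
      | succ n ih =>
        rw [Finset.sum_range_succ, add_assoc, pow_succ, ← mul_add, add_halves, mul_one]; exact ih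
    calc _ ≤ ∑ i ∈ Finset.Ico j n, r j * (1/2)^(i+1) := by
            refine Finset.sum_le_sum fun i hi => ?_
            gcongr
            exact Finset.inf'_le _ (by have := (Finset.mem_Ico.1 hi).1; simp; omega)
      _ = r j * ∑ i ∈ Finset.Ico j n, (1/2)^(i+1) := by rw [Finset.mul_sum]
      _ ≤ r j * ∑ i ∈ Finset.range n, (1/2)^(i+1) := by
            gcongr
            intro i hi; have := Finset.mem_Ico.1 hi; simp; omega
      _ ≤ r j * 1 := by
            gcongr
            exact le_self_add.trans_eq (hs n)
      _ = r j := mul_one _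

lemma exists_r {k : ℝ≥0 → ℝ≥0} (kc : Continuous k) (km : Monotone k) (kp : ∀ t, 0 < t → 0 < k t)
    {δ : ℝ≥0} (hδ : 0 < δ) (D : ℝ≥0) :
    ∃ r : ℝ≥0, 0 < r ∧ r ≤ δ ∧ ∀ t, δ ≤ t → t ≤ D → k (t + 2 * r) ≤ 2 * k t := by
  have hu := (isCompact_Icc (a := (0:ℝ≥0)) (b := D + 1)).uniformContinuousOn_of_continuous
    kc.continuousOn
  rw [Metric.uniformContinuousOn_iff] at hu
  obtain ⟨η, hη, h⟩ := hu (k δ) (by exact_mod_cast kp δ hδ)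
  let r : ℝ≥0 := min (min δ (1/2)) (η.toNNReal / 3)
  have hη' : 0 < η.toNNReal := Real.toNNReal_pos.2 hη
  have hr2 : 2 * r ≤ 1 := by
    calc 2 * r ≤ 2 * (1/2) := by gcongr; exact (min_le_left _ _).trans (min_le_right _ _)
      _ = 1 := by norm_num
  have hr3 : (2 * r : ℝ) < η := by
    have : r ≤ η.toNNReal / 3 := min_le_right _ _
    have h2 : (r:ℝ) ≤ η / 3 := by
      have := NNReal.coe_le_coe.2 this
      rwa [NNReal.coe_div, Real.coe_toNNReal _ hη.le] at this
    linarith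
  refine ⟨r, by positivity, (min_le_left _ _).trans (min_le_left _ _), fun t ht htD => ?_⟩
  have := h (t + 2 * r) ⟨zero_le, add_le_add htD hr2⟩ t ⟨zero_le, htD.trans le_self_add⟩ (by
    rw [NNReal.dist_eq]; push_cast
    rw [add_sub_cancel_left, abs_of_nonneg (by positivity)]; exact hr3)
  rw [NNReal.dist_eq] at this
  have h2 := (abs_lt.1 this).2
  have h3 : (k δ : ℝ) ≤ k t := by exact_mod_cast km ht
  rw [← NNReal.coe_le_coe]; push_cast
  linarith

variable {X : Type*} [MetricSpace X] [CompactSpace X] [MeasurableSpace X] [BorelSpace X]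

lemma chain {ρ : ℕ → ℝ≥0} {s : ℕ → St X} (hs : ∀ n, Ref (ρ n) (s n) (s (n+1))) (j m : ℕ)
    (U : Set X) : (s (j + m + 1)).ν U ≤ (s j).ν (Metric.thickening
      (∑ i ∈ Finset.Ico j (j + m + 1), ρ i : ℝ≥0) U) := by
  induction m generalizing U with
  | zero =>
    have h := (hs j).thick U
    simpa using h
  | succ m ih =>
    have h1 := (hs (j + m + 1)).thick U
    have h2 := h1.trans (ih _)
    refine h2.trans (measure_mono ?_)
    refine (Metric.thickening_thickening_subset _ _ _).trans (Metric.thickening_mono ?_ _)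
    rw [show j + (m + 1) + 1 = (j + m + 1) + 1 from rfl,
      Finset.sum_Ico_succ_top (show j ≤ j + m + 1 by omega)]
    rw [NNReal.coe_add]

lemma pow_le {ρ : ℕ → ℝ≥0} {s : ℕ → St X} (hs : ∀ n, Ref (ρ n) (s n) (s (n+1))) (j : ℕ)
    (U : Set X) : (s j).ν U ≤ 8 ^ j * (s 0).ν U := by
  induction j with
  | zero => simp
  | succ j ih =>
    refine ((hs j).le U).trans ?_
    rw [pow_succ', mul_assoc]
    gcongr

lemma key_v {k φ : ℝ≥0 → ℝ≥0} (k0 : k 0 = 0) (km : Monotone k) (φm : Monotone φ)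
    (φ3 : ∀ t, φ (3 * t) ≤ 2 * φ t)
    {δ r ρ : ℕ → ℝ≥0} (hδ : ∀ j, 0 < δ j) (hδ2 : ∀ j, δ j ≤ (1/2)^j)
    (hδφ : ∀ j, ∀ t ≤ δ j, φ t ≤ (1/16)^j) (hrδ : ∀ j, r j ≤ δ j)
    (hr : ∀ j t, δ j ≤ t → t ≤ nd (univ : Set X) → k (t + 2 * r j) ≤ 2 * k t)
    (hρ : ∀ j n, ∑ i ∈ Finset.Ico j n, ρ i ≤ r j)
    {s : ℕ → St X} (hs : ∀ n, Ref (ρ n) (s n) (s (n+1)))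
    (hμ : ∀ U, IsOpen U → (s 0).ν U ≤ ((φ (nd U) * k (nd U) : ℝ≥0) : ℝ≥0∞)) (ε : ℝ≥0) (hε : 0 < ε) :
    ∃ d : ℝ≥0, 0 < d ∧ ∀ U : Set X, IsOpen U → nd U ≤ d → ∃ n0, ∀ n ≥ n0,
      (s n).ν U ≤ ((ε * k (nd U) : ℝ≥0) : ℝ≥0∞) := by
  classical
  obtain ⟨J, hJ⟩ : ∃ J : ℕ, 32 * (1/2 : ℝ≥0)^J ≤ ε := by
    obtain ⟨J, hJ⟩ := exists_pow_lt_of_lt_one (show 0 < ε / 32 by positivity)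
      (show (1/2 : ℝ≥0) < 1 by rw [div_lt_one] <;> norm_num)
    refine ⟨J, ?_⟩
    calc 32 * (1/2 : ℝ≥0)^J ≤ 32 * (ε / 32) := by gcongr
      _ = ε := by field_simp
  have hne : (Finset.range (J+1)).Nonempty := ⟨0, by simp⟩
  refine ⟨(Finset.range (J+1)).inf' hne δ / 2,
    half_pos ((Finset.lt_inf'_iff _).2 fun i _ => hδ i), fun U hU hUd => ?_⟩
  set t := nd U with ht
  have htJ : ∀ i ≤ J, t < δ i := by
    intro i hi
    refine hUd.trans_lt ((half_lt_self ((Finset.lt_inf'_iff _).2 fun i _ => hδ i)).trans_le ?_)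
    exact Finset.inf'_le _ (by simp; omega)
  rcases eq_or_ne t 0 with h0 | h0
  · refine ⟨0, fun n _ => ?_⟩
    have h1 := hμ U hU
    rw [← ht, h0, k0, mul_zero, ENNReal.coe_zero] at h1
    refine (pow_le hs n U).trans ?_
    rw [le_antisymm h1 zero_le, mul_zero]; exact zero_le
  have htpos : 0 < t := pos_iff_ne_zero.2 h0
  have hex : ∃ j, δ j ≤ t := by
    obtain ⟨j, hj⟩ := exists_pow_lt_of_lt_one htpos
      (show (1/2 : ℝ≥0) < 1 by rw [div_lt_one] <;> norm_num)
    exact ⟨j, (hδ2 j).trans hj.le⟩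
  let j := Nat.find hex
  have hj : δ j ≤ t := Nat.find_spec hex
  have hjJ : J < j := by
    by_contra hcon
    exact absurd hj (not_le.2 (htJ j (not_lt.1 hcon)))
  obtain ⟨i, hi⟩ : ∃ i, j = i + 1 := ⟨j - 1, by omega⟩
  have hti : t ≤ δ i := (not_le.1 (Nat.find_min hex (m := i) (show i < j by omega))).le
  refine ⟨j + 1, fun n hn => ?_⟩
  obtain ⟨m, rfl⟩ : ∃ m, n = j + m + 1 := ⟨n - (j + 1), by omega⟩
  set R := ∑ i ∈ Finset.Ico j (j + m + 1), ρ i with hR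
  have hRr : R ≤ r j := hρ j _
  let V := Metric.thickening (R : ℝ) U
  have hVnd : nd V ≤ t + 2 * r j := (nd_thick U R).trans (by gcongr)
  have hφV : φ (nd V) ≤ 2 * (1/16)^i := by
    calc φ (nd V) ≤ φ (3 * t) := φm (hVnd.trans (by
            have : r j ≤ t := (hrδ j).trans hj
            calc t + 2 * r j ≤ t + 2 * t := by gcongr
              _ = 3 * t := by ring))
      _ ≤ 2 * φ t := φ3 t
      _ ≤ 2 * (1/16)^i := by gcongr; exact hδφ i t hti
  have hkV : k (nd V) ≤ 2 * k t := (km hVnd).trans (hr j t hj (nd_mono (subset_univ _)))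
  calc (s (j + m + 1)).ν U ≤ (s j).ν V := chain hs j m U
    _ ≤ 8 ^ j * (s 0).ν V := pow_le hs j V
    _ ≤ 8 ^ j * ((φ (nd V) * k (nd V) : ℝ≥0) : ℝ≥0∞) := by
        gcongr; exact hμ V Metric.isOpen_thickening
    _ = ((8 ^ j * (φ (nd V) * k (nd V)) : ℝ≥0) : ℝ≥0∞) := by push_cast; rfl
    _ ≤ _ := by
        rw [ENNReal.coe_le_coe]
        calc 8 ^ j * (φ (nd V) * k (nd V)) ≤ 8 ^ j * (2 * (1/16)^i * (2 * k t)) := by gcongr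
          _ = 32 * (1/2)^i * k t := by
              rw [hi, show (1/2 : ℝ≥0) = 8 * (1/16) by rw [mul_one_div, div_eq_div_iff] <;> norm_num,
                mul_pow]; ring
          _ ≤ 32 * (1/2)^J * k t := by
              gcongr 32 * ?_ * k t
              exact pow_le_pow_of_le_one zero_le (by rw [div_le_one] <;> norm_num) (by omega)
          _ ≤ ε * k t := by gcongr

end
end HM
namespace HM
section
variable {X : Type*} [MetricSpace X] [CompactSpace X]

section
variable [MeasurableSpace X] [BorelSpace X]

lemma notSF {k : ℝ≥0 → ℝ≥0} (kc : Continuous k) (km : Monotone k) {ρ : ℕ → ℝ≥0} {s : ℕ → St X}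
    (hs : ∀ n, Ref (ρ n) (s n) (s (n+1))) (hM : (s 0).ν univ ≠ 0)
    (key : ∀ ε : ℝ≥0, 0 < ε → ∃ d : ℝ≥0, 0 < d ∧ ∀ U : Set X, IsOpen U → nd U ≤ d →
      ∃ n0, ∀ n ≥ n0, (s n).ν U ≤ ((ε * k (nd U) : ℝ≥0) : ℝ≥0∞)) :
    ¬ SF k (⋂ n, (s n).K) := by
  classical
  rintro ⟨A, hA, hF⟩
  choose C hC using hF
  have hfin := (s 0).fin
  set M : ℝ≥0 := ((s 0).ν univ).toNNReal with hMdef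
  have hMc : (M : ℝ≥0∞) = (s 0).ν univ := ENNReal.coe_toNNReal (measure_ne_top _ _)
  have hM0 : 0 < M := by
    rw [pos_iff_ne_zero]; intro h; rw [h] at hMc; exact hM hMc.symm
  have hmass : ∀ n, (s n).ν univ = M := by
    intro n
    induction n with
    | zero => exact hMc.symm
    | succ n ih => rw [(hs n).mass, ih]
  have hanti : Antitone fun n => (s n).K := antitone_nat_of_succ_le fun n => (hs n).sub
  obtain ⟨η, hη, hηs⟩ := ENNReal.exists_pos_sum_of_countable (ε := (M / 2 : ℝ≥0))
    (by simpa using hM0.ne') ℕ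
  let ε : ℕ → ℝ≥0 := fun m => η m / (C m + 1)
  have hε : ∀ m, 0 < ε m := fun m => div_pos (hη m) (by positivity)
  choose d hd hdU using fun m => key (ε m) (hε m)
  obtain ⟨ζ, hζ, hζs⟩ := ENNReal.exists_pos_sum_of_countable (ε := 1) one_ne_zero ℕ
  choose U hU1 hU2 hU3 using fun m => hC m (d m / 2) (half_pos (hd m))
  choose O hO1 hO2 hO3 hO4 hO5 using fun m i =>
    exists_thick kc km (U m i) (hζ i) (half_pos (hd m))
  have hOd : ∀ m i, nd (O m i) ≤ d m := fun m i =>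
    (hO5 m i).trans ((add_le_add (hU2 m i) le_rfl).trans (add_halves _).le)
  have hsum : ∀ m, ∑' i, ((ε m * k (nd (O m i)) : ℝ≥0) : ℝ≥0∞) ≤ η m := by
    intro m
    calc ∑' i, ((ε m * k (nd (O m i)) : ℝ≥0) : ℝ≥0∞)
        ≤ ∑' i, (ε m : ℝ≥0∞) * (k (nd (U m i)) + ζ i) := by
          refine ENNReal.tsum_le_tsum fun i => ?_
          rw [ENNReal.coe_mul]
          gcongr
          exact_mod_cast hO4 m i
      _ = ε m * (∑' i, (k (nd (U m i)) : ℝ≥0∞) + ∑' i, (ζ i : ℝ≥0∞)) := by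
          rw [ENNReal.tsum_mul_left, ENNReal.tsum_add]
      _ ≤ ε m * (C m + 1) := by gcongr; exact hU3 m
      _ = ((ε m * (C m + 1) : ℝ≥0) : ℝ≥0∞) := by push_cast; rfl
      _ = η m := by
          congr 1; exact div_mul_cancel₀ _ (by positivity)
  have hcov : (⋂ n, (s n).K) ⊆ ⋃ p : ℕ × ℕ, O p.1 p.2 := by
    intro x hx
    obtain ⟨m, hm⟩ := mem_iUnion.1 (hA hx)
    obtain ⟨i, hi⟩ := mem_iUnion.1 (hU1 m hm)
    exact mem_iUnion.2 ⟨(m, i), hO2 m i hi⟩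
  have hcpt : IsCompact (⋂ n, (s n).K) := (isClosed_iInter fun n => (s n).cpt.isClosed).isCompact
  obtain ⟨F, hF⟩ := hcpt.elim_finite_subcover _ (fun p : ℕ × ℕ => hO1 p.1 p.2) hcov
  have hFo : IsOpen (⋃ p ∈ F, O p.1 p.2) := isOpen_biUnion fun p _ => hO1 p.1 p.2
  obtain ⟨n1, hn1⟩ := exists_subset_nhds_of_isCompact (hanti.directed_ge) (fun n => (s n).cpt)
    (fun x hx => hFo.mem_nhds (hF hx))
  choose n0 hn0 using fun m i => hdU m (O m i) (hO1 m i) (hOd m i)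
  let N := max n1 (F.sup fun p => n0 p.1 p.2)
  have hlast : (M : ℝ≥0∞) ≤ ((M / 2 : ℝ≥0) : ℝ≥0∞) := by
    calc (M : ℝ≥0∞) = (s N).ν univ := (hmass N).symm
      _ ≤ (s N).ν ((s N).K ∪ (s N).Kᶜ) := by rw [union_compl_self]
      _ ≤ (s N).ν (s N).K + (s N).ν (s N).Kᶜ := measure_union_le _ _
      _ = (s N).ν (s N).K := by rw [(s N).null, add_zero]
      _ ≤ (s N).ν (⋃ p ∈ F, O p.1 p.2) := measure_mono ((hanti (le_max_left _ _)).trans hn1)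
      _ ≤ ∑ p ∈ F, (s N).ν (O p.1 p.2) := measure_biUnion_finset_le _ _
      _ ≤ ∑ p ∈ F, ((ε p.1 * k (nd (O p.1 p.2)) : ℝ≥0) : ℝ≥0∞) := Finset.sum_le_sum fun p hp =>
          hn0 p.1 p.2 N ((Finset.le_sup (f := fun p : ℕ × ℕ => n0 p.1 p.2) hp).trans (le_max_right _ _))
      _ ≤ ∑' p : ℕ × ℕ, ((ε p.1 * k (nd (O p.1 p.2)) : ℝ≥0) : ℝ≥0∞) := ENNReal.sum_le_tsum _
      _ = ∑' m, ∑' i, ((ε m * k (nd (O m i)) : ℝ≥0) : ℝ≥0∞) :=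
          ENNReal.tsum_prod (f := fun m i => ((ε m * k (nd (O m i)) : ℝ≥0) : ℝ≥0∞))
      _ ≤ ∑' m, (η m : ℝ≥0∞) := ENNReal.tsum_le_tsum hsum
      _ ≤ _ := hηs.le
  rw [ENNReal.coe_le_coe] at hlast
  exact absurd hlast (not_le.2 (half_lt_self hM0))

end

/-- branch of the scheme -/
def node {α : Type*} (c : ℕ → α → Bool → α) (s0 : α) (σ : ℕ → Bool) : ℕ → α
  | 0 => s0
  | n + 1 => c n (node c s0 σ n) (σ n)

lemma node_congr {α : Type*} (c : ℕ → α → Bool → α) (s0 : α) {σ τ : ℕ → Bool} (n : ℕ)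
    (h : ∀ i < n, σ i = τ i) : node c s0 σ n = node c s0 τ n := by
  induction n with
  | zero => rfl
  | succ n ih =>
    rw [node, node, ih (fun i hi => h i (by omega)), h n (by omega)]

lemma main_X [Nonempty X] {k : ℝ≥0 → ℝ≥0} (kc : Continuous k) (km : Monotone k) (k0 : k 0 = 0)
    (kp : ∀ t, 0 < t → 0 < k t) (hX : ¬ SF k (univ : Set X))
    (hE : ∃ C : ℝ≥0, ∀ φ : ℝ≥0 → ℝ≥0, Monotone φ → (∀ t, φ (3 * t) ≤ 2 * φ t) →
      ∀ g0, Enl X (fun t => φ t * k t) g0 C) :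
    ∃ K : (ℕ → Bool) → Set X, (∀ σ, IsCompact (K σ)) ∧ (∀ σ τ, σ ≠ τ → Disjoint (K σ) (K τ)) ∧
      ∀ σ, ¬ SF k (K σ) := by
  classical
  obtain ⟨φ, φm, φ3, φ0, c, hc, hcont⟩ := stepA kc km k0 kp hX
  obtain ⟨C, hC⟩ := hE
  let g : ℝ≥0 → ℝ≥0 := fun t => φ t * k t
  have g0 : g 0 = 0 := by simp [g, k0]
  let _ : MeasurableSpace X := borel X
  have _ : BorelSpace X := ⟨rfl⟩
  obtain ⟨μ, hμf, hμ0, hμU⟩ := frostman (hC φ φm φ3 g0) (hcont g0) hc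
  have hsmall : Small μ := by
    intro ε hε
    have hk1 : ContinuousAt k 0 := kc.continuousAt
    obtain ⟨δ1, hδ1, h1⟩ := φ0 (ε / (k 1 + 1)) (div_pos hε (by positivity))
    let δ := min δ1 1 / 3
    have hδ : 0 < δ := by positivity
    refine ⟨δ, hδ, fun U hU => ?_⟩
    have hsub : U ⊆ Metric.thickening (δ : ℝ) U := Metric.self_subset_thickening (by exact_mod_cast hδ) U
    refine (measure_mono hsub).trans ((hμU _ Metric.isOpen_thickening).trans ?_)
    rw [ENNReal.coe_le_coe]
    have hnd : nd (Metric.thickening (δ : ℝ) U) ≤ min δ1 1 := by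
      refine (nd_thick U δ).trans ?_
      calc nd U + 2 * δ ≤ δ + 2 * δ := by gcongr
        _ = 3 * δ := by ring
        _ = min δ1 1 := mul_div_cancel₀ _ (by norm_num)
    calc φ (nd (Metric.thickening (δ : ℝ) U)) * k (nd (Metric.thickening (δ : ℝ) U))
        ≤ (ε / (k 1 + 1)) * (k 1 + 1) := by
          gcongr
          · exact h1 _ (hnd.trans (min_le_left _ _))
          · exact (km (hnd.trans (min_le_right _ _))).trans le_self_add
      _ = ε := div_mul_cancel₀ _ (by positivity)
  let s0 : St X := ⟨μ, univ, hμf, isCompact_univ, by simp, hsmall⟩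
  have hδex : ∀ j : ℕ, ∃ δ : ℝ≥0, 0 < δ ∧ δ ≤ (1/2)^j ∧ ∀ t ≤ δ, φ t ≤ (1/16)^j := by
    intro j
    obtain ⟨δ, hδ, h⟩ := φ0 ((1/16)^j) (by positivity)
    exact ⟨min δ ((1/2)^j), lt_min hδ (by positivity), min_le_right _ _,
      fun t ht => h t (ht.trans (min_le_left _ _))⟩
  choose δ hδ hδ2 hδφ using hδex
  choose r hr0 hrδ hr using fun j => exists_r kc km kp (hδ j) (nd (univ : Set X))
  obtain ⟨ρ, hρ0, hρ⟩ := sum_rho r hr0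
  choose ch hch1 hch2 using fun (n : ℕ) (s : St X) =>
    split s (ρ := ρ n) (by exact_mod_cast hρ0 n)
  have hs : ∀ σ n, Ref (ρ n) (node ch s0 σ n) (node ch s0 σ (n+1)) := fun σ n => hch1 n _ _
  refine ⟨fun σ => ⋂ n, (node ch s0 σ n).K, fun σ => (isClosed_iInter fun n => (node ch s0 σ n).cpt.isClosed).isCompact,
    ?_, fun σ => ?_⟩
  · intro σ τ hστ
    have hex : ∃ n, σ n ≠ τ n := by
      by_contra h; push Not at h; exact hστ (funext h)
    let n := Nat.find hex
    have hn : σ n ≠ τ n := Nat.find_spec hex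
    have heq : node ch s0 σ n = node ch s0 τ n := node_congr _ _ n fun i hi => by
      have := Nat.find_min hex hi
      push Not at this; exact this
    refine Disjoint.mono (iInter_subset _ (n+1)) (iInter_subset _ (n+1)) ?_
    change Disjoint (ch n (node ch s0 σ n) (σ n)).K (ch n (node ch s0 τ n) (τ n)).K
    rw [heq]
    have := hch2 n (node ch s0 τ n)
    cases h1 : σ n <;> cases h2 : τ n
    · exact absurd (h1.trans h2.symm) hn
    · exact this.symm
    · exact this
    · exact absurd (h1.trans h2.symm) hn
  · exact notSF kc km (hs σ) hμ0 (key_v k0 km φm φ3 hδ hδ2 hδφ hrδ hr hρ (hs σ) hμU)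

end
end HM
namespace HM
section

/-- truncated gauge -/
noncomputable def kk (h : ℝ≥0 → ℝ≥0∞) (t : ℝ≥0) : ℝ≥0 := (min (h t) 1).toNNReal

lemma coe_kk (h : ℝ≥0 → ℝ≥0∞) (t : ℝ≥0) : (kk h t : ℝ≥0∞) = min (h t) 1 :=
  ENNReal.coe_toNNReal (ne_top_of_le_ne_top ENNReal.one_ne_top (min_le_right _ _))

lemma kk_cont {h : ℝ≥0 → ℝ≥0∞} (hc : Continuous h) : Continuous (kk h) :=
  ENNReal.continuousOn_toNNReal.comp_continuous (hc.min continuous_const)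
    (fun t => ne_top_of_le_ne_top ENNReal.one_ne_top (min_le_right _ _))

lemma kk_mono {h : ℝ≥0 → ℝ≥0∞} (hm : Monotone h) : Monotone (kk h) := by
  intro a b hab
  rw [← ENNReal.coe_le_coe, coe_kk, coe_kk]
  exact min_le_min (hm hab) le_rfl

lemma kk_zero {h : ℝ≥0 → ℝ≥0∞} (h0 : h 0 = 0) : kk h 0 = 0 := by simp [kk, h0]

lemma kk_pos {h : ℝ≥0 → ℝ≥0∞} (hp : ∀ t, 0 < t → 0 < h t) (t : ℝ≥0) (ht : 0 < t) : 0 < kk h t := by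
  rw [← ENNReal.coe_lt_coe, coe_kk]
  exact lt_min (hp t ht) one_pos

lemma kk_le_one (h : ℝ≥0 → ℝ≥0∞) (t : ℝ≥0) : kk h t ≤ 1 := by
  rw [← ENNReal.coe_le_coe, coe_kk]; exact min_le_right _ _

lemma kk_eq {h : ℝ≥0 → ℝ≥0∞} (hc : Continuous h) (hm : Monotone h) (h0 : h 0 = 0) :
    ∃ a : ℝ≥0, 0 < a ∧ ∀ t ≤ a, (kk h t : ℝ≥0∞) = h t := by
  have h1 : ∀ᶠ t in 𝓝 (0:ℝ≥0), h t < 1 :=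
    hc.continuousAt.eventually (gt_mem_nhds (by rw [h0]; exact one_pos))
  have h2 : ∀ᶠ t in 𝓝[>] (0:ℝ≥0), h t < 1 ∧ 0 < t :=
    (h1.filter_mono nhdsWithin_le_nhds).and self_mem_nhdsWithin
  obtain ⟨a, ha, ha0⟩ := h2.exists
  refine ⟨a, ha0, fun t ht => ?_⟩
  rw [coe_kk, min_eq_left ((hm ht).trans ha.le)]

lemma kk_order {h : ℝ≥0 → ℝ≥0∞} (hm : Monotone h) (h0 : h 0 = 0) (hp : ∀ t, 0 < t → 0 < h t)
    (hf : FiniteOrder h) : ∃ C : ℝ≥0, ∀ t, kk h (3 * t) ≤ C * kk h t := by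
  obtain ⟨C1, hC1, hC1'⟩ := ENNReal.lt_iff_exists_nnreal_btwn.1 hf
  have hev := eventually_lt_of_limsup_lt hC1
  rw [eventually_nhdsWithin_iff, NNReal.nhds_zero_basis.eventually_iff] at hev
  obtain ⟨t0, ht0, hev⟩ := hev
  have hk0 := kk_pos hp t0 ht0
  refine ⟨max (max C1 1) (1 / kk h t0), fun t => ?_⟩
  rcases eq_or_ne t 0 with rfl | htne
  · rw [mul_zero, kk_zero h0]; exact zero_le
  have htp : 0 < t := pos_iff_ne_zero.2 htne
  rcases le_or_gt t0 t with htt | htt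
  · calc kk h (3 * t) ≤ 1 := kk_le_one _ _
      _ = (1 / kk h t0) * kk h t0 := by field_simp
      _ ≤ _ := by
        gcongr
        · exact le_max_right _ _
        · exact kk_mono hm htt
  · rcases le_or_gt 1 (h t) with h1 | h1
    · have : kk h t = 1 := by
        rw [← ENNReal.coe_inj, coe_kk, min_eq_right h1]; rfl
      rw [this, mul_one]
      exact (kk_le_one _ _).trans ((le_max_right _ _).trans (le_max_left _ _))
    · have h2 := hev (show t ∈ Iio t0 from htt) htp
      have h3 : h (3 * t) ≤ C1 * h t := by
        rw [← ENNReal.div_le_iff_le_mul (Or.inl (hp t htp).ne') (Or.inl (h1.trans ENNReal.one_lt_top).ne)]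
        exact h2.le
      have h4 : kk h (3 * t) ≤ C1 * kk h t := by
        rw [← ENNReal.coe_le_coe, ENNReal.coe_mul, coe_kk, coe_kk, min_eq_left h1.le]
        exact (min_le_left _ _).trans h3
      refine h4.trans ?_
      gcongr
      exact (le_max_left _ _).trans (le_max_left _ _)

variable {X : Type*} [MetricSpace X] [CompactSpace X]

lemma content_le_fin {g : ℝ≥0 → ℝ≥0} (g0 : g 0 = 0) {n : ℕ} {S : Set X} {W : Fin n → Set X}
    (hS : S ⊆ ⋃ i, W i) {b : ℝ≥0} (hW : ∀ i, g (nd (W i)) ≤ b) :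
    content X g g0 S ≤ (n : ℝ≥0) * b := by
  calc content X g g0 S ≤ content X g g0 (⋃ i, W i) := measure_mono hS
    _ ≤ ∑ i, content X g g0 (W i) := by
        have := measure_iUnion_le (μ := content X g g0) W
        rwa [tsum_fintype] at this
    _ ≤ ∑ i : Fin n, (b : ℝ≥0∞) := Finset.sum_le_sum fun i _ =>
        (OuterMeasure.ofFunction_le _).trans (by exact_mod_cast hW i)
    _ = (n : ℝ≥0) * b := by simp

/-- enlargement of `U` -/
def hat (U : Set X) : Set X := ⋃₀ {V | IsOpen V ∧ (V ∩ U).Nonempty ∧ nd V ≤ nd U}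

lemma mem_hat {U : Set X} {y : X} (hy : y ∈ hat U) : ∃ x ∈ U, nndist y x ≤ nd U := by
  obtain ⟨V, ⟨-, ⟨x, hxV, hxU⟩, hV⟩, hyV⟩ := hy
  exact ⟨x, hxU, (nndist_le_nd hyV hxV).trans hV⟩

lemma nd_hat (U : Set X) : nd (hat U) ≤ 3 * nd U := by
  refine nd_le_iff.2 fun y hy y' hy' => ?_
  obtain ⟨x, hx, h1⟩ := mem_hat hy
  obtain ⟨x', hx', h2⟩ := mem_hat hy'
  have h3 := nndist_le_nd hx hx'
  rw [nndist_comm] at h2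
  calc nndist y y' ≤ nndist y x + nndist x x' + nndist x' y' :=
        (nndist_triangle _ x' _).trans (by gcongr; exact nndist_triangle _ _ _)
    _ ≤ nd U + nd U + nd U := by gcongr
    _ = 3 * nd U := by ring

lemma enl_a {k : ℝ≥0 → ℝ≥0} {C : ℝ≥0} (hk : ∀ t, k (3 * t) ≤ C * k t) (km : Monotone k) :
    ∃ C : ℝ≥0, ∀ φ : ℝ≥0 → ℝ≥0, Monotone φ → (∀ t, φ (3 * t) ≤ 2 * φ t) →
      ∀ g0, Enl X (fun t => φ t * k t) g0 C := by
  refine ⟨2 * C, fun φ φm φ3 g0 U _ _ => ?_⟩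
  refine (OuterMeasure.ofFunction_le _).trans ?_
  rw [← ENNReal.coe_mul, ENNReal.coe_le_coe]
  have h := nd_hat U
  calc φ (nd (hat U)) * k (nd (hat U)) ≤ φ (3 * nd U) * k (3 * nd U) :=
        mul_le_mul' (φm h) (km h)
    _ ≤ (2 * φ (nd U)) * (C * k (nd U)) := mul_le_mul' (φ3 _) (hk _)
    _ = 2 * C * (φ (nd U) * k (nd U)) := by ring

lemma enl_cover {k : ℝ≥0 → ℝ≥0} (km : Monotone k) (n : ℕ)
    (hn : ∀ U : Set X, ∃ W : Fin n → Set X, hat U ⊆ ⋃ i, W i ∧ ∀ i, nd (W i) ≤ nd U) :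
    ∃ C : ℝ≥0, ∀ φ : ℝ≥0 → ℝ≥0, Monotone φ → (∀ t, φ (3 * t) ≤ 2 * φ t) →
      ∀ g0, Enl X (fun t => φ t * k t) g0 C := by
  refine ⟨n, fun φ φm φ3 g0 U _ _ => ?_⟩
  obtain ⟨W, hW1, hW2⟩ := hn U
  exact content_le_fin g0 hW1 (fun i => mul_le_mul' (φm (hW2 i)) (km (hW2 i)))

lemma enl_c {k : ℝ≥0 → ℝ≥0} (km : Monotone k)
    (hu : ∀ x y z : X, dist x z ≤ max (dist x y) (dist y z)) :
    ∃ C : ℝ≥0, ∀ φ : ℝ≥0 → ℝ≥0, Monotone φ → (∀ t, φ (3 * t) ≤ 2 * φ t) →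
      ∀ g0, Enl X (fun t => φ t * k t) g0 C := by
  refine enl_cover km 1 fun U => ⟨fun _ => hat U, subset_iUnion (fun _ : Fin 1 => hat U) 0, fun _ => ?_⟩
  refine nd_le_iff.2 fun y hy y' hy' => ?_
  obtain ⟨x, hx, h1⟩ := mem_hat hy
  obtain ⟨x', hx', h2⟩ := mem_hat hy'
  have h3 := nndist_le_nd hx hx'
  rw [nndist_comm] at h2
  rw [← NNReal.coe_le_coe] at h1 h2 h3 ⊢
  simp only [coe_nndist] at *
  exact (hu y x' y').trans (max_le ((hu y x x').trans (max_le h1 h3)) h2)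

end

section
variable {Z : Type*} [MetricSpace Z] {Y : Set Z} [CompactSpace Y]

lemma ediam_image_val (S : Set Y) : Metric.ediam (Subtype.val '' S) = Metric.ediam S :=
  isometry_subtype_coe.ediam_image S

lemma enl_b {k : ℝ≥0 → ℝ≥0} (km : Monotone k) (hZ : FiniteStructuralDim Z) :
    ∃ C : ℝ≥0, ∀ φ : ℝ≥0 → ℝ≥0, Monotone φ → (∀ t, φ (3 * t) ≤ 2 * φ t) →
      ∀ g0, Enl Y (fun t => φ t * k t) g0 C := by
  obtain ⟨N, δ₀, hδ₀, hN⟩ := hZ (1/3) (by positivity)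
  let _ : MeasurableSpace Y := borel Y
  have _ : BorelSpace Y := ⟨rfl⟩
  obtain ⟨n, P, -, -, hPu, hP⟩ := fin_part (X := Y) (ρ := (δ₀ / 3 : ℝ≥0))
    (by rw [NNReal.coe_pos]; positivity)
  refine enl_cover km (N + n) fun U => ?_
  rcases le_or_gt (3 * nd U) δ₀ with h | h
  · obtain ⟨V, hV1, hV2⟩ := hN (Subtype.val '' hat U) (by
      change Metric.ediam _ ≤ _
      rw [ediam_image_val, ← coe_nd]
      exact_mod_cast (nd_hat U).trans h)
    refine ⟨Fin.append (fun i => Subtype.val ⁻¹' V i) (fun _ => ∅), ?_, fun i => ?_⟩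
    · intro x hx
      obtain ⟨i, hi⟩ := mem_iUnion.1 (hV1 (mem_image_of_mem _ hx))
      refine mem_iUnion.2 ⟨Fin.castAdd n i, ?_⟩
      rw [Fin.append_left]; exact hi
    · induction i using Fin.addCases with
      | left i =>
        rw [Fin.append_left, ← ENNReal.coe_le_coe, coe_nd, ← ediam_image_val]
        refine (Metric.ediam_mono (image_preimage_subset _ _)).trans ((hV2 i).trans ?_)
        change _ * Metric.ediam _ ≤ _
        rw [ediam_image_val, ← coe_nd, ← ENNReal.coe_mul, ENNReal.coe_le_coe]
        calc 1/3 * nd (hat U) ≤ 1/3 * (3 * nd U) := by gcongr; exact nd_hat U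
          _ = nd U := by rw [← mul_assoc]; norm_num
      | right i => rw [Fin.append_right, nd_empty]; exact zero_le
  · refine ⟨Fin.append (fun _ => ∅) P, ?_, fun i => ?_⟩
    · intro x _
      obtain ⟨i, hi⟩ := mem_iUnion.1 (hPu ▸ mem_univ x)
      refine mem_iUnion.2 ⟨Fin.natAdd N i, ?_⟩
      rw [Fin.append_right]; exact hi
    · induction i using Fin.addCases with
      | left i => rw [Fin.append_left, nd_empty]; exact zero_le
      | right i =>
        rw [Fin.append_right]
        refine (nd_le_iff.2 fun x hx y hy => ?_ : nd (P i) ≤ δ₀ / 3).trans ?_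
        · rw [← NNReal.coe_le_coe, coe_nndist]; exact (hP i x hx y hy).le
        · rw [div_le_iff₀ (by norm_num), mul_comm]; exact h.le

lemma sigma_of_SF {h : ℝ≥0 → ℝ≥0∞} (hc : Continuous h) (hm : Monotone h) (h0 : h 0 = 0)
    (hY : IsCompact Y) (hSF : SF (kk h) (univ : Set Y)) : SigmaFiniteSet (hausdorffM h) Y := by
  obtain ⟨A, hA, hF⟩ := hSF
  obtain ⟨a, ha, hka⟩ := kk_eq hc hm h0
  let _ : MeasurableSpace Z := borel Z
  have _ : BorelSpace Z := ⟨rfl⟩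
  let μ : Measure Z := Measure.mkMetric (fun d => h d.toNNReal)
  have hμ : μ.toOuterMeasure = hausdorffM h := Measure.mkMetric_toOuterMeasure _
  have hfin : ∀ m, μ (Subtype.val '' A m) < ⊤ := by
    intro m
    obtain ⟨C, hC⟩ := hF m
    let δ : ℕ → ℝ≥0 := fun n => min a (1 / (n + 1))
    have hδ : ∀ n, 0 < δ n := fun n => lt_min ha (by positivity)
    choose U hU1 hU2 hU3 using fun n => hC (δ n) (hδ n)
    have hδt : Tendsto (fun n => (δ n : ℝ≥0∞)) atTop (𝓝 0) := by
      rw [← ENNReal.coe_zero, ENNReal.tendsto_coe]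
      refine tendsto_of_tendsto_of_tendsto_of_le_of_le tendsto_const_nhds
        (tendsto_one_div_add_atTop_nhds_zero_nat (𝕜 := ℝ≥0)) (fun n => zero_le)
        (fun n => min_le_right _ _)
    have := Measure.mkMetric_le_liminf_tsum (Subtype.val '' A m) (fun n => (δ n : ℝ≥0∞)) hδt
      (fun n i => Subtype.val '' U n i)
      (Eventually.of_forall fun n i => by
        rw [ediam_image_val, ← coe_nd]; exact_mod_cast hU2 n i)
      (Eventually.of_forall fun n => by
        rw [← image_iUnion]; exact image_mono (hU1 n))
      (fun d => h d.toNNReal)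
    refine (this.trans (b := _) ?_).trans_lt (ENNReal.coe_lt_top (r := C))
    refine (liminf_le_liminf (v := fun _ => (C : ℝ≥0∞)) (Eventually.of_forall fun n => ?_)).trans_eq
      (liminf_const _)
    refine le_trans (ENNReal.tsum_le_tsum fun i => ?_) (hU3 n)
    simp only [ediam_image_val]
    rw [hka _ ((hU2 n i).trans (min_le_left _ _))]
    exact le_rfl
  refine ⟨fun m => toMeasurable μ (Subtype.val '' A m) ∩ Y, fun m => ⟨?_, ?_⟩, ?_⟩
  · rw [← hμ]
    exact le_toOuterMeasure_caratheodory μ _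
      ((measurableSet_toMeasurable _ _).inter hY.isClosed.measurableSet)
  · rw [← hμ]
    change μ _ < ⊤
    exact (measure_mono inter_subset_left).trans_lt ((measure_toMeasurable _).trans_lt (hfin m))
  · refine Subset.antisymm (fun y hy => ?_) (iUnion_subset fun m => inter_subset_right)
    obtain ⟨m, hm⟩ := mem_iUnion.1 (hA (mem_univ ⟨y, hy⟩))
    exact mem_iUnion.2 ⟨m, subset_toMeasurable _ _ ⟨_, hm, rfl⟩, hy⟩

lemma SF_of_sigma {h : ℝ≥0 → ℝ≥0∞} (hm : Monotone h) (h0 : h 0 = 0) {K : Set Y}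
    (hK : SigmaFiniteSet (hausdorffM h) (Subtype.val '' K)) : SF (kk h) K := by
  obtain ⟨A, hA, hKA⟩ := hK
  let _ : MeasurableSpace Z := borel Z
  have _ : BorelSpace Z := ⟨rfl⟩
  let μ : Measure Z := Measure.mkMetric (fun d => h d.toNNReal)
  have hμ : μ.toOuterMeasure = hausdorffM h := Measure.mkMetric_toOuterMeasure _
  refine ⟨fun m => Subtype.val ⁻¹' A m, ?_, fun m => ?_⟩
  · intro x hx
    have : (x : Z) ∈ ⋃ n, A n := hKA ▸ mem_image_of_mem _ hx
    obtain ⟨n, hn⟩ := mem_iUnion.1 this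
    exact mem_iUnion.2 ⟨n, hn⟩
  · have hfin : μ (A m) < ⊤ := by
      have := (hA m).2
      rw [← hμ] at this; exact this
    refine ⟨(μ (A m)).toNNReal + 1, fun δ hδ => ?_⟩
    have hlt : μ (A m) < (((μ (A m)).toNNReal + 1 : ℝ≥0) : ℝ≥0∞) := by
      rw [ENNReal.coe_add, ENNReal.coe_toNNReal hfin.ne]
      exact ENNReal.lt_add_right hfin.ne one_ne_zero
    have h1 : μ (A m) = _ := Measure.mkMetric_apply (fun d => h d.toNNReal) (A m)
    have h2 := (le_iSup₂ (f := fun (r : ℝ≥0∞) (_ : 0 < r) =>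
      ⨅ (t : ℕ → Set Z) (_ : A m ⊆ iUnion t) (_ : ∀ n, Metric.ediam (t n) ≤ r),
        ∑' n, ⨆ _ : (t n).Nonempty, h (Metric.ediam (t n)).toNNReal) (δ : ℝ≥0∞)
        (by exact_mod_cast hδ)).trans_lt (h1.symm.trans_lt hlt)
    simp only [iInf_lt_iff] at h2
    obtain ⟨t, ht1, ht2, ht3⟩ := h2
    have hnd : ∀ i, nd (Subtype.val ⁻¹' t i : Set Y) ≤ (Metric.ediam (t i)).toNNReal := by
      intro i
      rw [← ENNReal.coe_le_coe, coe_nd, ← ediam_image_val,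
        ENNReal.coe_toNNReal (ne_top_of_le_ne_top ENNReal.coe_ne_top (ht2 i))]
      exact Metric.ediam_mono (image_preimage_subset _ _)
    refine ⟨fun i => Subtype.val ⁻¹' t i, ?_, fun i => ?_, ?_⟩
    · rw [← preimage_iUnion]; exact preimage_mono ht1
    · refine (hnd i).trans ?_
      rw [← ENNReal.coe_le_coe,
        ENNReal.coe_toNNReal (ne_top_of_le_ne_top ENNReal.coe_ne_top (ht2 i))]
      exact ht2 i
    · refine (ENNReal.tsum_le_tsum fun i => ?_).trans ht3.le
      beta_reduce
      rcases (t i).eq_empty_or_nonempty with he | hne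
      · rw [he, preimage_empty, nd_empty, kk_zero h0]; simp
      · rw [ciSup_pos hne, coe_kk]
        exact (min_le_left _ _).trans (hm (hnd i))

end
end HM
/-- continuum many disjoint non-σ-finite compact subsets in the compact case. -/
theorem statement_4 {Z : Type*} [MetricSpace Z] (Y : Set Z) (h : ℝ≥0 → ℝ≥0∞)
    (hH : PropertyHInf Y h) (hYcomp : IsCompact Y) :
    ∃ D : Set (Set Z), Cardinal.mk D = 2 ^ Cardinal.aleph0 ∧ D.Pairwise Disjoint ∧
      ∀ K ∈ D, IsCompact K ∧ K ⊆ Y ∧ ¬ SigmaFiniteSet (hausdorffM h) K := by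
  classical
  obtain ⟨⟨_, _, _, hh, hc, h0, alt⟩, hns⟩ := hH
  have hcs : CompactSpace Y := isCompact_iff_compactSpace.1 hYcomp
  have hX : ¬ HM.SF (HM.kk h) (univ : Set Y) := fun hSF =>
    hns (HM.sigma_of_SF hc hh.mono h0 hYcomp hSF)
  have sf_empty : HM.SF (HM.kk h) (∅ : Set Y) :=
    HM.Fk.sf ⟨0, fun δ _ => ⟨fun _ => ∅, empty_subset _, fun _ => by simp, by
      simp [HM.kk_zero h0]⟩⟩
  have hne : Nonempty Y := by
    by_contra hemp
    rw [not_nonempty_iff] at hemp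
    exact hX (by rw [univ_eq_empty_iff.2 hemp]; exact sf_empty)
  have km := HM.kk_mono hh.mono
  have hE : ∃ C : ℝ≥0, ∀ φ : ℝ≥0 → ℝ≥0, Monotone φ → (∀ t, φ (3 * t) ≤ 2 * φ t) →
      ∀ g0, HM.Enl Y (fun t => φ t * HM.kk h t) g0 C := by
    rcases alt with ha | hb | hu
    · obtain ⟨C, hC⟩ := HM.kk_order hh.mono h0 hh.pos ha
      exact HM.enl_a hC km
    · exact HM.enl_b km hb
    · exact HM.enl_c km (fun x y z => hu x y z)
  obtain ⟨K, hK1, hK2, hK3⟩ := HM.main_X (HM.kk_cont hc) km (HM.kk_zero h0) (HM.kk_pos hh.pos) hX hE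
  have hdisj : ∀ σ τ, σ ≠ τ → Disjoint (Subtype.val '' K σ : Set Z) (Subtype.val '' K τ) :=
    fun σ τ hst => (disjoint_image_iff Subtype.val_injective).2 (hK2 σ τ hst)
  have hinj : Function.Injective (fun σ => (Subtype.val '' K σ : Set Z)) := by
    intro σ τ hst
    by_contra hne'
    have h1 := hdisj σ τ hne'
    simp only at hst
    rw [← hst, disjoint_self, bot_eq_empty, image_eq_empty] at h1
    exact hK3 σ (by rw [h1]; exact sf_empty)
  refine ⟨range (fun σ => (Subtype.val '' K σ : Set Z)), ?_, ?_, ?_⟩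
  · have e := Equiv.ulift.trans (Equiv.ofInjective _ hinj)
    rw [← Cardinal.mk_congr e]
    simp
  · rintro _ ⟨σ, rfl⟩ _ ⟨τ, rfl⟩ hst
    exact hdisj σ τ (fun h => hst (by rw [h]))
  · rintro _ ⟨σ, rfl⟩
    exact ⟨(hK1 σ).image continuous_subtype_val, by simp,
      fun hs => hK3 σ (HM.SF_of_sigma hh.mono h0 hs)⟩
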